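/- Let Γ be a group. If the set of left-order positive cones on Γ is infinite, then it is uncountable. -/

import Mathlib

/-- `P` is the positive cone of a left-invariant linear order on the group `G`:
it is closed under multiplication and `G` is the disjoint union of `P`, `P⁻¹`
and `{1}`. -/
def IsPosCone {G : Type*} [Group G] (P : Set G) : Prop :=
  (∀ a ∈ P, ∀ b ∈ P, a * b ∈ P) ∧
  (∀ g : G, g ∈ P ∨ g⁻¹ ∈ P ∨ g = 1) ∧
  (1 : G) ∉ P ∧
  ∀ g ∈ P, g⁻¹ ∉ P


/-- `P` is the positive cone of an order on `E` relative to the convex subgroup `D`. -/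
structure RelCone {G : Type*} [Group G] (D E : Subgroup G) (P : Set G) : Prop where
  le : D ≤ E
  sub : ∀ x ∈ P, x ∈ E
  mul : ∀ a ∈ P, ∀ b ∈ P, a * b ∈ P
  tot : ∀ x ∈ E, x ∈ P ∨ x⁻¹ ∈ P ∨ x ∈ D
  disj : ∀ x ∈ P, x ∉ D
  left : ∀ d ∈ D, ∀ x ∈ P, d * x ∈ P
  right : ∀ d ∈ D, ∀ x ∈ P, x * d ∈ P

/-- `C` is convex for the cone `P`. -/
def ConvCone {G : Type*} [Group G] (C : Subgroup G) (P : Set G) : Prop :=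
  ∀ x ∈ P, x ∉ C → ∀ c ∈ C, c * x ∈ P ∧ x * c ∈ P

section partA
variable {G : Type*} [Group G] {C D E : Subgroup G} {P Q : Set G}

lemma RelCone.antisymm (h : RelCone D E P) {x : G} (hx : x ∈ P) (hx' : x⁻¹ ∈ P) : False := by
  have := h.mul _ hx _ hx'
  rw [mul_inv_cancel] at this
  exact h.disj _ this D.one_mem

lemma isPosCone_iff : IsPosCone P ↔ RelCone ⊥ ⊤ P := by
  constructor
  · rintro ⟨h1, h2, h3, h4⟩
    refine ⟨bot_le, by simp, h1, by simpa using h2, ?_, ?_, ?_⟩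
    · intro x hx hb
      rw [Subgroup.mem_bot] at hb
      exact h3 (hb ▸ hx)
    · intro d hd x hx
      rw [Subgroup.mem_bot] at hd
      simpa [hd] using hx
    · intro d hd x hx
      rw [Subgroup.mem_bot] at hd
      simpa [hd] using hx
  · intro h
    refine ⟨h.mul, by simpa using h.tot, fun h1 => h.disj _ h1 (Subgroup.one_mem _),
      fun g hg hg' => h.antisymm hg hg'⟩

lemma RelCone.pow_mem (h : RelCone D E P) {x : G} (hx : x ∈ P) {n : ℕ} (hn : n ≠ 0) :
    x ^ n ∈ P := by
  obtain ⟨m, rfl⟩ := Nat.exists_eq_succ_of_ne_zero hn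
  induction m with
  | zero => simpa using hx
  | succ k ih => rw [Nat.succ_eq_add_one, pow_succ]; exact h.mul _ (ih (by simp)) _ hx

lemma RelCone.isolated (h : RelCone D E P) {x : G} (hx : x ∈ E) {n : ℕ} (hn : n ≠ 0)
    (hxn : x ^ n ∈ D) : x ∈ D := by
  rcases h.tot x hx with h1 | h1 | h1
  · exact absurd hxn (h.disj _ (h.pow_mem h1 hn))
  · refine absurd ?_ (h.disj _ (h.pow_mem h1 hn))
    rw [inv_pow]; exact D.inv_mem hxn
  · exact h1

lemma RelCone.diff (h : RelCone ⊥ E P) (hC : C ≤ E) (hc : ConvCone C P) :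
    RelCone C E (P \ C) := by
  refine ⟨hC, fun x hx => h.sub x hx.1, ?_, ?_, fun x hx => hx.2, ?_, ?_⟩
  · rintro a ⟨ha, ha'⟩ b ⟨hb, hb'⟩
    refine ⟨h.mul _ ha _ hb, fun hab => ?_⟩
    have := (hc b hb hb' _ (C.inv_mem hab)).2
    simp only [mul_inv_rev, mul_inv_cancel_left] at this
    exact h.antisymm ha this
  · intro x hx
    by_cases hxC : x ∈ C
    · exact Or.inr (Or.inr hxC)
    rcases h.tot x hx with h1 | h1 | h1
    · exact Or.inl ⟨h1, hxC⟩
    · exact Or.inr (Or.inl ⟨h1, fun h => hxC (by simpa using h)⟩)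
    · rw [Subgroup.mem_bot] at h1
      exact absurd (h1 ▸ C.one_mem) hxC
  · rintro d hd x ⟨hx, hx'⟩
    exact ⟨(hc x hx hx' d hd).1, fun h => hx' ((C.mul_mem_cancel_left hd).1 h)⟩
  · rintro d hd x ⟨hx, hx'⟩
    exact ⟨(hc x hx hx' d hd).2, fun h => hx' ((C.mul_mem_cancel_right hd).1 h)⟩

lemma RelCone.inter (h : RelCone D E P) (hD : D ≤ C) (hC : C ≤ E) : RelCone D C (P ∩ C) := by
  refine ⟨hD, fun x hx => hx.2, fun a ha b hb => ⟨h.mul _ ha.1 _ hb.1, C.mul_mem ha.2 hb.2⟩,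
    ?_, fun x hx => h.disj x hx.1, fun d hd x hx => ⟨h.left d hd x hx.1, C.mul_mem (hD hd) hx.2⟩,
    fun d hd x hx => ⟨h.right d hd x hx.1, C.mul_mem hx.2 (hD hd)⟩⟩
  intro x hx
  rcases h.tot x (hC hx) with h1 | h1 | h1
  · exact Or.inl ⟨h1, hx⟩
  · exact Or.inr (Or.inl ⟨h1, C.inv_mem hx⟩)
  · exact Or.inr (Or.inr h1)

lemma RelCone.union (hQ : RelCone D C Q) (hP : RelCone C E P) : RelCone D E (P ∪ Q) := by
  refine ⟨hQ.le.trans hP.le, ?_, ?_, ?_, ?_, ?_, ?_⟩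
  · rintro x (hx | hx)
    · exact hP.sub x hx
    · exact hP.le (hQ.sub x hx)
  · rintro a (ha | ha) b (hb | hb)
    · exact Or.inl (hP.mul _ ha _ hb)
    · exact Or.inl (hP.right _ (hQ.sub b hb) _ ha)
    · exact Or.inl (hP.left _ (hQ.sub a ha) _ hb)
    · exact Or.inr (hQ.mul _ ha _ hb)
  · intro x hx
    rcases hP.tot x hx with h | h | h
    · exact Or.inl (Or.inl h)
    · exact Or.inr (Or.inl (Or.inl h))
    · rcases hQ.tot x h with h | h | h
      · exact Or.inl (Or.inr h)
      · exact Or.inr (Or.inl (Or.inr h))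
      · exact Or.inr (Or.inr h)
  · rintro x (hx | hx)
    · exact fun h => hP.disj x hx (hQ.le h)
    · exact hQ.disj x hx
  · rintro d hd x (hx | hx)
    · exact Or.inl (hP.left _ (hQ.le hd) _ hx)
    · exact Or.inr (hQ.left _ hd _ hx)
  · rintro d hd x (hx | hx)
    · exact Or.inl (hP.right _ (hQ.le hd) _ hx)
    · exact Or.inr (hQ.right _ hd _ hx)

lemma countable_upper (h : {P : Set G | RelCone D E P}.Countable) (hQ : RelCone D C Q) :
    {P : Set G | RelCone C E P}.Countable := by
  refine Set.MapsTo.countable_of_injOn (f := fun P => P ∪ Q) (t := {P : Set G | RelCone D E P})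
    (fun P hP => hQ.union hP) ?_ h
  intro P hP P' hP' he
  have key : ∀ R : Set G, RelCone C E R → R = (R ∪ Q) \ C := by
    intro R hR
    ext x
    constructor
    · exact fun hx => ⟨Or.inl hx, hR.disj x hx⟩
    · rintro ⟨hx | hx, hx'⟩
      · exact hx
      · exact absurd (hQ.sub x hx) hx'
  have he' : P ∪ Q = P' ∪ Q := he
  rw [key P hP, key P' hP', he']

lemma countable_lower (h : {P : Set G | RelCone D E P}.Countable) (hP : RelCone C E P) :
    {Q : Set G | RelCone D C Q}.Countable := by
  refine Set.MapsTo.countable_of_injOn (f := fun Q => P ∪ Q) (t := {P : Set G | RelCone D E P})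
    (fun Q hQ => RelCone.union hQ hP) ?_ h
  intro Q hQ Q' hQ' he
  have key : ∀ R : Set G, RelCone D C R → R = (P ∪ R) ∩ C := by
    intro R hR
    ext x
    constructor
    · exact fun hx => ⟨Or.inr hx, hR.sub x hx⟩
    · rintro ⟨hx | hx, hx'⟩
      · exact absurd hx' (hP.disj x hx)
      · exact hx
  have he' : P ∪ Q = P ∪ Q' := he
  rw [key Q hQ, key Q' hQ', he']

lemma ConvCone.total (h : RelCone ⊥ ⊤ P) (hC : ConvCone C P) (hD : ConvCone D P) :
    C ≤ D ∨ D ≤ C := by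
  by_contra hcon
  push Not at hcon
  obtain ⟨h1, h2⟩ := hcon
  have aux : ∀ A B : Subgroup G, ¬ A ≤ B → ∃ a ∈ A, a ∉ B ∧ a ∈ P := by
    intro A B hAB
    obtain ⟨a, ha, hb⟩ := SetLike.not_le_iff_exists.1 hAB
    rcases h.tot a (Subgroup.mem_top a) with h1 | h1 | h1
    · exact ⟨a, ha, hb, h1⟩
    · exact ⟨a⁻¹, A.inv_mem ha, fun h => hb (by simpa using h), h1⟩
    · rw [Subgroup.mem_bot] at h1
      exact absurd (h1 ▸ B.one_mem) hb
  obtain ⟨c, hc, hcD, hcP⟩ := aux C D h1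
  obtain ⟨d, hd, hdC, hdP⟩ := aux D C h2
  have e1 := (hD c hcP hcD _ (D.inv_mem hd)).1
  have e2 := (hC d hdP hdC _ (C.inv_mem hc)).1
  exact h.antisymm e1 (by simpa using e2)

lemma ConvCone.of_mul (h : RelCone ⊥ ⊤ P) (hC : ConvCone C P) {a b : G} (ha : a ∈ P) (hb : b ∈ P)
    (hab : a * b ∈ C) : a ∈ C := by
  by_contra hn
  have hbn : b ∉ C := fun hb' => hn ((C.mul_mem_cancel_right hb').1 hab)
  exact ((h.diff le_top hC).mul _ ⟨ha, hn⟩ _ ⟨hb, hbn⟩).2 hab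

/-- The set of convex subgroups containing `g`. -/
def cutOf (P : Set G) (g : G) : Set (Subgroup G) := {C | ConvCone C P ∧ g ∈ C}

lemma cutOf_inv (g : G) : cutOf P g⁻¹ = cutOf P g := by
  ext C; simp [cutOf]

lemma cutOf_lt (h : RelCone ⊥ ⊤ P) {g k : G} (hC : ConvCone C P) (hg : g ∈ C) (hk : k ∉ C) :
    cutOf P (g * k) = cutOf P k ∧ cutOf P (k * g) = cutOf P k := by
  constructor
  · ext D
    constructor
    · rintro ⟨hD, hm⟩
      refine ⟨hD, ?_⟩
      rcases hC.total h hD with hle | hle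
      · exact (D.mul_mem_cancel_left (hle hg)).1 hm
      · exact absurd ((C.mul_mem_cancel_left hg).1 (hle hm)) hk
    · rintro ⟨hD, hm⟩
      refine ⟨hD, ?_⟩
      rcases hC.total h hD with hle | hle
      · exact D.mul_mem (hle hg) hm
      · exact absurd (hle hm) hk
  · ext D
    constructor
    · rintro ⟨hD, hm⟩
      refine ⟨hD, ?_⟩
      rcases hC.total h hD with hle | hle
      · exact (D.mul_mem_cancel_right (hle hg)).1 hm
      · exact absurd ((C.mul_mem_cancel_right hg).1 (hle hm)) hk
    · rintro ⟨hD, hm⟩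
      refine ⟨hD, ?_⟩
      rcases hC.total h hD with hle | hle
      · exact D.mul_mem hm (hle hg)
      · exact absurd (hle hm) hk

lemma cutOf_mul (h : RelCone ⊥ ⊤ P) {g k : G} (hg : g ∈ P) (hk : k ∈ P)
    (he : cutOf P g = cutOf P k) : cutOf P (g * k) = cutOf P g := by
  ext D
  constructor
  · rintro ⟨hD, hm⟩
    exact ⟨hD, hD.of_mul h hg hk hm⟩
  · intro hm
    have hm' := hm
    rw [he] at hm'
    exact ⟨hm.1, D.mul_mem hm.2 hm'.2⟩

/-- Flip the order at the jumps in `S`. -/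
def flipCone (P : Set G) (S : Set (Set (Subgroup G))) : Set G :=
  {g | (cutOf P g ∉ S ∧ g ∈ P) ∨ (cutOf P g ∈ S ∧ g⁻¹ ∈ P)}

lemma flipCone_isCone (h : RelCone ⊥ ⊤ P) (S : Set (Set (Subgroup G))) :
    RelCone ⊥ ⊤ (flipCone P S) := by
  rw [← isPosCone_iff]
  have hconv : ∀ {C : Subgroup G} (_ : ConvCone C P) {g k : G} (_ : g ∈ C) (_ : k ∉ C),
      k ∈ flipCone P S → g * k ∈ flipCone P S ∧ k * g ∈ flipCone P S := by
    intro C hC g k hg hk hkS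
    obtain ⟨e1, e2⟩ := cutOf_lt h hC hg hk
    rcases hkS with ⟨hS, hp⟩ | ⟨hS, hp⟩
    · exact ⟨Or.inl ⟨e1 ▸ hS, (hC k hp hk g hg).1⟩, Or.inl ⟨e2 ▸ hS, (hC k hp hk g hg).2⟩⟩
    · have hk' : k⁻¹ ∉ C := fun h => hk (by simpa using h)
      have := hC _ hp hk' _ (C.inv_mem hg)
      refine ⟨Or.inr ⟨e1 ▸ hS, ?_⟩, Or.inr ⟨e2 ▸ hS, ?_⟩⟩
      · rw [mul_inv_rev]; exact this.2
      · rw [mul_inv_rev]; exact this.1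
  refine ⟨?_, ?_, ?_, ?_⟩
  · intro a ha b hb
    by_cases he : cutOf P a = cutOf P b
    · rcases ha with ⟨ha1, ha2⟩ | ⟨ha1, ha2⟩
      · rcases hb with ⟨hb1, hb2⟩ | ⟨hb1, hb2⟩
        · exact Or.inl ⟨by rw [cutOf_mul h ha2 hb2 he]; exact ha1, h.mul _ ha2 _ hb2⟩
        · exact absurd (he ▸ hb1) ha1
      · rcases hb with ⟨hb1, hb2⟩ | ⟨hb1, hb2⟩
        · exact absurd (he ▸ ha1) hb1
        · have he' : cutOf P b⁻¹ = cutOf P a⁻¹ := by rw [cutOf_inv, cutOf_inv, he]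
          have := cutOf_mul h hb2 ha2 he'
          refine Or.inr ⟨?_, by rw [mul_inv_rev]; exact h.mul _ hb2 _ ha2⟩
          rw [← cutOf_inv, mul_inv_rev, this, cutOf_inv]
          exact hb1
    · have : (∃ C, ConvCone C P ∧ a ∈ C ∧ b ∉ C) ∨ (∃ C, ConvCone C P ∧ b ∈ C ∧ a ∉ C) := by
        by_contra hcon
        push Not at hcon
        apply he
        ext C
        exact ⟨fun hx => ⟨hx.1, hcon.1 C hx.1 hx.2⟩, fun hx => ⟨hx.1, hcon.2 C hx.1 hx.2⟩⟩
      rcases this with ⟨C, hC, h1, h2⟩ | ⟨C, hC, h1, h2⟩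
      · exact (hconv hC h1 h2 hb).1
      · exact (hconv hC h1 h2 ha).2
  · intro g
    by_cases hS : cutOf P g ∈ S
    · rcases h.tot g (Subgroup.mem_top g) with h1 | h1 | h1
      · exact Or.inr (Or.inl (Or.inr ⟨by rwa [cutOf_inv], by simpa using h1⟩))
      · exact Or.inl (Or.inr ⟨hS, h1⟩)
      · exact Or.inr (Or.inr (by simpa using h1))
    · rcases h.tot g (Subgroup.mem_top g) with h1 | h1 | h1
      · exact Or.inl (Or.inl ⟨hS, h1⟩)
      · exact Or.inr (Or.inl (Or.inl ⟨by rwa [cutOf_inv], h1⟩))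
      · exact Or.inr (Or.inr (by simpa using h1))
  · rintro (h1 | h1)
    · exact h.disj _ h1.2 (Subgroup.one_mem _)
    · exact h.disj _ h1.2 (by simp)
  · rintro g (h1 | h1) (h2 | h2)
    · exact h.antisymm h1.2 h2.2
    · rw [cutOf_inv] at h2; exact h1.1 h2.1
    · rw [cutOf_inv] at h2; exact h2.1 h1.1
    · exact h.antisymm h1.2 h2.2

lemma conv_finite (hcount : {P : Set G | RelCone ⊥ ⊤ P}.Countable) (h : RelCone ⊥ ⊤ P) :
    {C : Subgroup G | ConvCone C P}.Finite := by
  by_contra hinf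
  let R : Set (Set (Subgroup G)) := cutOf P '' P
  have hR : R.Infinite := by
    intro hfin
    apply hinf
    have : (𝒫 R).Finite := hfin.finite_subsets
    refine Set.Finite.of_finite_image (f := fun C => {K ∈ R | C ∈ K})
      (this.subset ?_) ?_
    · rintro _ ⟨C, _, rfl⟩ K hK
      exact hK.1
    · have aux : ∀ C D : Subgroup G, ConvCone C P → ConvCone D P →
          {K ∈ R | C ∈ K} = {K ∈ R | D ∈ K} → C ≤ D := by
        intro C D hC hD he g hg
        have pos : ∀ g ∈ C, g ∈ P → g ∈ D := by
          intro g hg hp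
          have : cutOf P g ∈ {K ∈ R | C ∈ K} := ⟨⟨g, hp, rfl⟩, hC, hg⟩
          rw [he] at this
          exact this.2.2
        rcases h.tot g (Subgroup.mem_top g) with h1 | h1 | h1
        · exact pos g hg h1
        · simpa using pos _ (C.inv_mem hg) h1
        · rw [Subgroup.mem_bot] at h1
          exact h1 ▸ D.one_mem
      intro C hC D hD he
      exact le_antisymm (aux C D hC hD he) (aux D C hD hC he.symm)
  have hc : (𝒫 R).Countable := by
    refine Set.MapsTo.countable_of_injOn (f := fun S => flipCone P S)
      (fun S _ => flipCone_isCone h S) ?_ hcount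
    have aux : ∀ S T : Set (Set (Subgroup G)), S ⊆ R → flipCone P S = flipCone P T → S ⊆ T := by
      intro S T hS he K hK
      obtain ⟨g, hg, rfl⟩ := hS hK
      have hin : g⁻¹ ∈ flipCone P S := Or.inr ⟨by rwa [cutOf_inv], by simpa using hg⟩
      rw [he] at hin
      rcases hin with h1 | h1
      · exact (h.antisymm hg h1.2).elim
      · rw [cutOf_inv] at h1; exact h1.1
    intro S hS T hT he
    exact Set.Subset.antisymm (aux S T hS he) (aux T S hT he.symm)
  have hu : Uncountable (Set R) := by
    have : Infinite R := hR.to_subtype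
    rw [← Cardinal.aleph0_lt_mk_iff, Cardinal.mk_set]
    exact (Cardinal.aleph0_le_mk R).trans_lt (Cardinal.cantor _)
  have : Countable (𝒫 R) := hc.to_subtype
  have e : Set R ≃ 𝒫 R := (Equiv.Set.powerset R).symm
  exact (not_countable_iff.2 hu) (e.injective.countable)

end partA

section partB

lemma exists_finite_orbit {G X : Type*} [Group G] [TopologicalSpace X] [CompactSpace X] [T2Space X]
    (act : G → X → X) (hcont : ∀ g, Continuous (act g)) (hone : ∀ x, act 1 x = x)
    (hmul : ∀ g k x, act (g * k) x = act g (act k x))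
    (K : Set X) (hK : IsClosed K) (hKn : K.Nonempty) (hKc : K.Countable)
    (hKinv : ∀ g, ∀ x ∈ K, act g x ∈ K) :
    ∃ x ∈ K, (Set.range fun g => act g x).Finite := by
  let S : Set (Set X) := {M | IsClosed M ∧ M.Nonempty ∧ M ⊆ K ∧ ∀ g, ∀ x ∈ M, act g x ∈ M}
  obtain ⟨M, hMK, hM⟩ := zorn_superset_nonempty S (by
    intro c hc hchain hcn
    refine ⟨⋂₀ c, ⟨isClosed_sInter fun t ht => (hc ht).1, ?_, ?_, ?_⟩,
      fun s hs => Set.sInter_subset_of_mem hs⟩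
    · have : Nonempty c := hcn.to_subtype
      refine IsCompact.nonempty_sInter_of_directed_nonempty_isCompact_isClosed ?_
        (fun U hU => (hc hU).2.1) (fun U hU => (hc hU).1.isCompact) (fun U hU => (hc hU).1)
      intro a ha b hb
      rcases hchain.total ha hb with h | h
      · exact ⟨a, ha, le_rfl, h⟩
      · exact ⟨b, hb, h, le_rfl⟩
    · obtain ⟨t, ht⟩ := hcn
      exact (Set.sInter_subset_of_mem ht).trans (hc ht).2.2.1
    · intro g x hx t ht
      exact (hc ht).2.2.2 g x (hx t ht)) K ⟨hK, hKn, le_rfl, hKinv⟩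
  obtain ⟨⟨hMcl, hMn, -, hMinv⟩, hmin⟩ := hM
  have hmin' : ∀ T, IsClosed T → T.Nonempty → T ⊆ M → (∀ g, ∀ x ∈ T, act g x ∈ T) → M ⊆ T :=
    fun T h1 h2 h3 h4 => hmin ⟨h1, h2, h3.trans hMK, h4⟩ h3
  have hCs : CompactSpace M := isCompact_iff_compactSpace.1 hMcl.isCompact
  have hCo : Countable M := (hKc.mono hMK).to_subtype
  have hNe : Nonempty M := hMn.to_subtype
  obtain ⟨x, hx⟩ := nonempty_interior_of_iUnion_of_closed (X := M) (f := fun x : M => {x})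
    (fun _ => isClosed_singleton) (by ext; simp)
  obtain ⟨y, hy⟩ := hx
  obtain ⟨V, hV, hVo, hyV⟩ := mem_interior.1 hy
  have hyx : y = x := by simpa using hV hyV
  subst hyx
  obtain ⟨U, hU, rfl⟩ := isOpen_induced_iff.1 hVo
  have hyU : (y : X) ∈ U := hyV
  have hUM : ∀ z ∈ M, z ∈ U → z = y := by
    intro z hz hzU
    have : (⟨z, hz⟩ : M) = y := by simpa using hV (show (⟨z, hz⟩ : M) ∈ _ from hzU)
    exact congrArg Subtype.val this
  have horb : ∀ z ∈ M, ∃ g, act g z = y := by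
    intro z hz
    have hsub : (Set.range fun g => act g z) ⊆ M := by
      rintro _ ⟨g, rfl⟩; exact hMinv g z hz
    have := hmin' (closure (Set.range fun g => act g z)) isClosed_closure
      (Set.Nonempty.closure ⟨_, ⟨1, rfl⟩⟩) (hMcl.closure_subset_iff.2 hsub) (by
        intro g w hw
        refine map_mem_closure (hcont g) hw ?_
        rintro _ ⟨k, rfl⟩
        exact ⟨g * k, hmul g k z⟩)
    have hyc := this y.2
    obtain ⟨w, hwU, g, rfl⟩ := mem_closure_iff.1 hyc U hU hyU
    exact ⟨g, hUM _ (hMinv g z hz) hwU⟩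
  obtain ⟨t, ht⟩ := hMcl.isCompact.elim_finite_subcover (fun g : G => (act g) ⁻¹' U)
    (fun g => hU.preimage (hcont g)) (by
      intro z hz
      obtain ⟨g, hg⟩ := horb z hz
      exact Set.mem_iUnion.2 ⟨g, by simpa [hg] using hyU⟩)
  have hfin : M.Finite := by
    refine (t.finite_toSet.image fun g => act g⁻¹ y).subset ?_
    intro z hz
    obtain ⟨g, hg, hgz⟩ := Set.mem_iUnion₂.1 (ht hz)
    refine ⟨g, hg, ?_⟩
    have := hUM _ (hMinv g z hz) hgz
    simp only
    rw [← this, ← hmul, inv_mul_cancel, hone]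
  refine ⟨y, hMK y.2, hfin.subset ?_⟩
  rintro _ ⟨g, rfl⟩
  exact hMinv g y y.2

lemma exists_good_cone {G : Type*} [Group G] (hc : {P : Set G | IsPosCone P}.Countable)
    (hn : {P : Set G | IsPosCone P}.Nonempty) :
    ∃ P : Set G, IsPosCone P ∧ ∃ H : Subgroup G, (∀ g : G, ∃ n : ℕ, n ≠ 0 ∧ g ^ n ∈ H) ∧
      ∀ h ∈ H, ∀ x ∈ P, h * x * h⁻¹ ∈ P := by
  let toSet : (G → Bool) → Set G := fun f => {x | f x = true}
  have hinj : Function.Injective toSet := by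
    intro f f' h
    funext x
    have : x ∈ toSet f ↔ x ∈ toSet f' := by rw [h]
    simp only [toSet, Set.mem_ofPred_eq] at this
    exact Bool.eq_iff_iff.2 this
  let act : G → (G → Bool) → (G → Bool) := fun g f x => f (g⁻¹ * x * g)
  have hmul : ∀ g k x, act (g * k) x = act g (act k x) := by
    intro g k f; funext x; simp [act, mul_assoc]
  have hone : ∀ x, act 1 x = x := by intro f; funext x; simp [act]
  let K : Set (G → Bool) := {f | IsPosCone (toSet f)}
  have hcl : IsClosed K := by
    have e : K = {f : G → Bool | ∀ a b : G, (f a = true → f b = true → f (a * b) = true)} ∩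
        ({f | ∀ g : G, f g = true ∨ f g⁻¹ = true ∨ g = 1} ∩
        ({f | f 1 = true → False} ∩ {f | ∀ g, f g = true → f g⁻¹ = true → False})) := by
      ext f
      simp only [K, IsPosCone, toSet, Set.mem_ofPred_eq, Set.mem_inter_iff]
      exact ⟨fun ⟨h1, h2, h3, h4⟩ => ⟨fun a b ha hb => h1 a ha b hb, h2, h3, h4⟩,
        fun ⟨h1, h2, h3, h4⟩ => ⟨fun a ha b hb => h1 a b ha hb, h2, h3, h4⟩⟩
    have hco : ∀ g : G, IsClopen {f : G → Bool | f g = true} := fun g =>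
      (isClopen_discrete {true}).preimage (continuous_apply g)
    rw [e]
    refine IsClosed.inter ?_ (IsClosed.inter ?_ (IsClosed.inter ?_ ?_))
    · simp only [Set.ofPred_forall]
      refine isClosed_iInter fun a => isClosed_iInter fun b => ?_
      exact isClosed_imp (hco a).isOpen (isClosed_imp (hco b).isOpen (hco _).isClosed)
    · simp only [Set.ofPred_forall]
      refine isClosed_iInter fun a => ?_
      exact (hco _).isClosed.union ((hco _).isClosed.union isClosed_const)
    · exact isClosed_imp (hco _).isOpen isClosed_const
    · simp only [Set.ofPred_forall]
      refine isClosed_iInter fun a => ?_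
      exact isClosed_imp (hco a).isOpen (isClosed_imp (hco _).isOpen isClosed_const)
  obtain ⟨f, hf, hfin⟩ := exists_finite_orbit act
    (fun g => continuous_pi fun x => continuous_apply _) hone hmul K hcl
    (by
      obtain ⟨P, hP⟩ := hn
      classical
      refine ⟨fun x => decide (x ∈ P), ?_⟩
      have : toSet (fun x => decide (x ∈ P)) = P := by ext; simp [toSet]
      simpa only [K, Set.mem_ofPred_eq, this] using hP)
    (Set.MapsTo.countable_of_injOn (f := toSet) (fun f hf => hf) hinj.injOn hc)
    (by
      rintro g f ⟨h1, h2, h3, h4⟩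
      refine ⟨?_, ?_, ?_, ?_⟩
      · intro a ha b hb
        have := h1 _ ha _ hb
        simpa [toSet, act, mul_assoc] using this
      · intro a
        have := h2 (g⁻¹ * a * g)
        have e : g⁻¹ * a * g = 1 ↔ a = 1 := by
          rw [mul_assoc, inv_mul_eq_iff_eq_mul, mul_one]; simp
        rw [e] at this
        simpa [toSet, act, mul_assoc] using this
      · simpa [toSet, act, mul_assoc] using h3
      · intro a ha
        have := h4 _ ha
        simpa [toSet, act, mul_assoc] using this)
  let H : Subgroup G :=
    { carrier := {g | act g f = f}
      one_mem' := hone f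
      mul_mem' := by
        intro a b ha hb
        simp only [Set.mem_ofPred_eq] at *
        rw [hmul, hb, ha]
      inv_mem' := by
        intro a ha
        simp only [Set.mem_ofPred_eq] at *
        conv_lhs => rw [← ha, ← hmul, inv_mul_cancel, hone] }
  refine ⟨toSet f, hf, H, ?_, ?_⟩
  · intro g
    have hni : ¬ Function.Injective (fun n : ℕ => act (g ^ n) f) := by
      intro hi
      refine Set.infinite_range_of_injective hi (hfin.subset ?_)
      rintro _ ⟨n, rfl⟩
      exact ⟨g ^ n, rfl⟩
    have : ∃ m n : ℕ, m < n ∧ act (g ^ m) f = act (g ^ n) f := by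
      by_contra hcon
      push Not at hcon
      refine hni fun m n hmn => ?_
      rcases lt_trichotomy m n with h | h | h
      · exact absurd hmn (hcon m n h)
      · exact h
      · exact absurd hmn.symm (hcon n m h)
    obtain ⟨m, n, hlt, he⟩ := this
    refine ⟨n - m, by omega, ?_⟩
    change act (g ^ (n - m)) f = f
    have e2 : g ^ n = g ^ m * g ^ (n - m) := by rw [← pow_add]; congr 1; omega
    rw [e2] at he
    have := congrArg (act (g ^ m)⁻¹) he
    rw [← hmul, ← hmul, inv_mul_cancel, inv_mul_cancel_left, hone] at this
    exact this.symm
  · intro h hh x hx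
    have hh' : act h f = f := hh
    change f _ = true
    have : act h f (h * x * h⁻¹) = f x := by simp [act, mul_assoc]
    rw [hh'] at this
    rw [this]; exact hx

end partB

section partC

lemma comm_of_arch {Q : Type*} [Group Q] [LinearOrder Q] [MulLeftStrictMono Q]
    [MulRightStrictMono Q] (harch : ∀ a : Q, 1 < a → ∀ b : Q, ∃ n : ℕ, b ≤ a ^ n) (x y : Q) :
    x * y = y * x := by
  have hl : MulLeftMono Q := ⟨fun c a b hab => by
    rcases hab.lt_or_eq with h | h
    · exact (mul_lt_mul_right h c).le
    · rw [h]⟩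
  have hr : MulRightMono Q := ⟨fun c a b hab => by
    rcases hab.lt_or_eq with h | h
    · exact (mul_lt_mul_left h c).le
    · rw [h]⟩
  have hmono : ∀ d : Q, 1 < d → ∀ m n : ℤ, m ≤ n → d ^ m ≤ d ^ n := by
    intro d hd m n hmn
    obtain ⟨k, rfl⟩ := Int.le.dest hmn
    rw [zpow_add, zpow_natCast]
    exact le_mul_of_one_le_right' (one_le_pow_of_one_le' hd.le k)
  have hex : ∀ d : Q, 1 < d → ∀ x : Q, ∃ m : ℤ, d ^ m ≤ x ∧ x < d ^ (m + 1) := by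
    intro d hd x
    obtain ⟨n, hn⟩ := harch d hd x
    obtain ⟨k, hk⟩ := harch d hd x⁻¹
    obtain ⟨m, hm, hmax⟩ := Int.exists_greatest_of_bdd (P := fun m : ℤ => d ^ m ≤ x) ⟨n + 1, by
      intro z hz
      by_contra hcon
      push Not at hcon
      have h1 := hmono d hd (n + 1) z hcon.le
      have h2 : d ^ (n : ℤ) < d ^ ((n : ℤ) + 1) := by
        rw [zpow_add_one]; exact lt_mul_of_one_lt_right' _ hd
      rw [zpow_natCast] at h2
      exact absurd (h1.trans hz) (not_le.2 (hn.trans_lt h2))⟩ ⟨-(k : ℤ), by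
        rw [zpow_neg, zpow_natCast]
        exact inv_le_of_inv_le' hk⟩
    refine ⟨m, hm, ?_⟩
    by_contra hcon
    push Not at hcon
    have := hmax _ hcon
    omega
  by_cases hmin : ∃ d : Q, 1 < d ∧ ∀ e, 1 < e → d ≤ e
  · obtain ⟨d, hd, hdm⟩ := hmin
    have hz : ∀ x : Q, ∃ m : ℤ, x = d ^ m := by
      intro x
      obtain ⟨m, h1, h2⟩ := hex d hd x
      refine ⟨m, ?_⟩
      by_contra hne
      have h3 : d ^ m < x := lt_of_le_of_ne h1 (Ne.symm hne)
      have h4 : 1 < (d ^ m)⁻¹ * x := by rwa [lt_inv_mul_iff_mul_lt, mul_one]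
      have h5 := hdm _ h4
      rw [le_inv_mul_iff_mul_le, ← zpow_add_one] at h5
      exact absurd h2 (not_lt.2 h5)
    obtain ⟨m, rfl⟩ := hz x
    obtain ⟨n, rfl⟩ := hz y
    rw [← zpow_add, ← zpow_add, add_comm]
  · push Not at hmin
    have key : ∀ x y : Q, ¬ y * x < x * y := by
      intro x y hlt
      obtain ⟨c, hc⟩ : ∃ c, c = (y * x)⁻¹ * (x * y) := ⟨_, rfl⟩
      have hc1 : 1 < c := by rw [hc, lt_inv_mul_iff_mul_lt, mul_one]; exact hlt
      have hxy : x * y = y * x * c := by rw [hc, mul_inv_cancel_left]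
      obtain ⟨e, he1, he2⟩ : ∃ e : Q, 1 < e ∧ e * e ≤ c := by
        obtain ⟨d, hd1, hd2⟩ := hmin c hc1
        by_cases hdd : d * d ≤ c
        · exact ⟨d, hd1, hdd⟩
        · push Not at hdd
          refine ⟨d⁻¹ * c, by rw [lt_inv_mul_iff_mul_lt, mul_one]; exact hd2, ?_⟩
          have h1 : d⁻¹ * c < d := by rwa [inv_mul_lt_iff_lt_mul]
          calc d⁻¹ * c * (d⁻¹ * c) ≤ d * (d⁻¹ * c) := mul_le_mul_left h1.le _
            _ = c := mul_inv_cancel_left _ _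
      obtain ⟨m, hm1, hm2⟩ := hex e he1 x
      obtain ⟨n, hn1, hn2⟩ := hex e he1 y
      have h1 : x * y < e ^ (m + 1) * e ^ (n + 1) := mul_lt_mul_of_lt_of_lt hm2 hn2
      have h2 : e ^ n * e ^ m * (e * e) ≤ y * x * c := mul_le_mul' (mul_le_mul' hn1 hm1) he2
      rw [hxy] at h1
      have h3 : e ^ n * e ^ m * (e * e) = e ^ (m + 1) * e ^ (n + 1) := by
        rw [← zpow_two, ← zpow_add, ← zpow_add, ← zpow_add]; congr 1; ring
      rw [h3] at h2
      exact absurd h1 (not_lt.2 h2)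
    exact le_antisymm (not_lt.1 (key x y)) (not_lt.1 (key y x))

lemma comm_of_arch_cone {Q : Type*} [Group Q] {P : Set Q} (hP : IsPosCone P)
    (harch : ∀ a ∈ P, ∀ b : Q, ∃ n : ℕ, b⁻¹ * a ^ n ∈ P) (x y : Q) : x * y = y * x := by
  obtain ⟨h1, h2, h3, h4⟩ := hP
  have hb1 : ∀ h ∈ P, ∀ a ∈ P, h⁻¹ * a * h ∈ P := by
    intro h hh a ha
    by_contra hcon
    have hne : h⁻¹ * a * h ≠ 1 := by
      intro he
      rw [mul_assoc, inv_mul_eq_iff_eq_mul, mul_one] at he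
      have : a = 1 := by simpa using he
      exact h3 (this ▸ ha)
    have hinv : h⁻¹ * a⁻¹ * h ∈ P := by
      rcases h2 (h⁻¹ * a * h) with h | h | h
      · exact absurd h hcon
      · simpa [mul_assoc] using h
      · exact absurd h hne
    have hpow : ∀ n : ℕ, h⁻¹ * (a⁻¹) ^ n * h ∈ P ∨ n = 0 := by
      intro n
      induction n with
      | zero => right; rfl
      | succ k ih =>
        left
        rcases ih with ih | ih
        · have := h1 _ ih _ hinv
          rw [pow_succ]
          simpa [mul_assoc] using this
        · subst ih; simpa using hinv
    obtain ⟨n, hn⟩ := harch a ha h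
    rcases hpow n with h5 | h5
    · have := h1 _ (h1 _ hn _ hh) _ h5
      have e : h⁻¹ * a ^ n * h * (h⁻¹ * a⁻¹ ^ n * h) = 1 := by
        simp [mul_assoc]
      rw [e] at this
      exact h3 this
    · subst h5
      simp at hn
      exact h4 h hh hn
  have hb2 : ∀ h ∈ P, ∀ a ∈ P, h * a * h⁻¹ ∈ P := by
    intro h hh a ha
    rcases h2 (h * a * h⁻¹) with h5 | h5 | h5
    · exact h5
    · have := hb1 h hh _ h5
      have e : h⁻¹ * (h * a * h⁻¹)⁻¹ * h = a⁻¹ := by group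
      rw [e] at this
      exact absurd this (h4 a ha)
    · have : a = 1 := by
        rw [mul_inv_eq_one] at h5
        simpa using h5
      exact absurd (this ▸ ha) h3
  classical
  let _ : LinearOrder Q :=
    { le := fun a b => a⁻¹ * b ∈ P ∨ a = b
      lt := fun a b => a⁻¹ * b ∈ P
      le_refl := fun a => Or.inr rfl
      le_trans := by
        rintro a b c (h | rfl) (h' | rfl)
        · left; simpa [mul_assoc] using h1 _ h _ h'
        · exact Or.inl h
        · exact Or.inl h'
        · exact Or.inr rfl
      lt_iff_le_not_ge := by
        intro a b
        constructor
        · intro h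
          refine ⟨Or.inl h, ?_⟩
          rintro (h' | rfl)
          · have := h1 _ h _ h'
            simp [mul_assoc] at this
            exact h3 this
          · simp at h; exact h3 h
        · rintro ⟨h | rfl, h'⟩
          · exact h
          · exact absurd (Or.inr rfl) h'
      le_antisymm := by
        rintro a b (h | rfl) (h' | h')
        · have := h1 _ h _ h'
          simp [mul_assoc] at this
          exact absurd this h3
        · exact h'.symm
        · rfl
        · rfl
      le_total := by
        intro a b
        rcases h2 (a⁻¹ * b) with h | h | h
        · exact Or.inl (Or.inl h)
        · right; left; simpa using h
        · right; right; rw [inv_mul_eq_one] at h; exact h.symm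
      toDecidableLE := Classical.decRel _ }
  have hlt : ∀ a b : Q, a < b ↔ a⁻¹ * b ∈ P := fun a b => Iff.rfl
  have i1 : MulLeftStrictMono Q := ⟨by
    intro c a b hab
    rw [hlt] at *
    simpa [mul_assoc] using hab⟩
  have i2 : MulRightStrictMono Q := ⟨by
    intro c a b hab
    simp only [Function.swap]
    rw [hlt] at *
    rcases h2 c with h | h | h
    · simpa [mul_assoc] using hb1 c h _ hab
    · simpa [mul_assoc] using hb2 _ h _ hab
    · subst h; simpa using hab⟩
  refine comm_of_arch ?_ x y
  intro a ha b
  rw [hlt] at ha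
  obtain ⟨n, hn⟩ := harch a (by simpa using ha) b
  exact ⟨n, le_of_lt ((hlt _ _).2 hn)⟩

lemma exists_rat_hom {Q : Type*} [CommGroup Q] (a : Q) (ha : ∀ n : ℤ, a ^ n = 1 → n = 0)
    (htf : ∀ x : Q, ∀ n : ℤ, n ≠ 0 → x ^ n = 1 → x = 1)
    (hr : ∀ x : Q, ∃ n m : ℤ, n ≠ 0 ∧ x ^ n = a ^ m) :
    ∃ ι : Q → ℚ, (∀ x y, ι (x * y) = ι x + ι y) ∧ ∀ x, ι x = 0 ↔ x = 1 := by
  choose n m hn hnm using hr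
  have key : ∀ (x : Q) (N M : ℤ), N ≠ 0 → x ^ N = a ^ M → (m x : ℚ) / n x = M / N := by
    intro x N M hN h
    have h1 : a ^ (M * n x - m x * N) = 1 := by
      rw [zpow_sub, zpow_mul, ← h, zpow_mul, ← hnm, ← zpow_mul, ← zpow_mul, mul_comm N]
      simp
    have h2 := ha _ h1
    have hn' : (n x : ℚ) ≠ 0 := by exact_mod_cast hn x
    have hN' : (N : ℚ) ≠ 0 := by exact_mod_cast hN
    rw [div_eq_div_iff hn' hN']
    have : M * n x = m x * N := by linarith
    exact_mod_cast this.symm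
  refine ⟨fun x => m x / n x, ?_, ?_⟩
  · intro x y
    have hx' : (n x : ℚ) ≠ 0 := by exact_mod_cast hn x
    have hy' : (n y : ℚ) ≠ 0 := by exact_mod_cast hn y
    simp only
    rw [key (x * y) (n x * n y) (m x * n y + n x * m y) (mul_ne_zero (hn x) (hn y)) ?_]
    · push_cast
      field_simp
    · rw [mul_zpow, zpow_mul, hnm x, mul_comm (n x) (n y), zpow_mul y, hnm y, zpow_add, zpow_mul,
        ← zpow_mul a (m y), mul_comm (m y)]
  · intro x
    have hx' : (n x : ℚ) ≠ 0 := by exact_mod_cast hn x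
    constructor
    · intro h
      rw [div_eq_zero_iff] at h
      have : m x = 0 := by
        rcases h with h | h
        · exact_mod_cast h
        · exact absurd h hx'
      have h2 := hnm x
      rw [this, zpow_zero] at h2
      exact htf x _ (hn x) h2
    · rintro rfl
      simp only
      rw [key 1 1 0 one_ne_zero (by simp)]
      simp

lemma not_countable_of_irrational {X : Type*} {S : Set X} (f : ℝ → X)
    (hf : ∀ α, Irrational α → f α ∈ S)
    (hi : ∀ α β, Irrational α → Irrational β → α < β → f α ≠ f β) : ¬ S.Countable := by
  intro hS
  have h1 : {α : ℝ | Irrational α}.Countable := by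
    refine Set.MapsTo.countable_of_injOn (f := f) (fun α hα => hf α hα) ?_ hS
    intro α hα β hβ he
    rcases lt_trichotomy α β with h | h | h
    · exact absurd he (hi α β hα hβ h)
    · exact h
    · exact absurd he.symm (hi β α hβ hα h)
  have h2 : (Set.range ((↑) : ℚ → ℝ)).Countable := Set.countable_range _
  have h3 : (Set.univ : Set ℝ) = {α : ℝ | Irrational α} ∪ Set.range ((↑) : ℚ → ℝ) := by
    ext x
    simp only [Set.mem_univ, Set.mem_union, true_iff]
    by_cases h : Irrational x
    · exact Or.inl h
    · right; simpa [Irrational] using h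
  exact Cardinal.not_countable_real (h3 ▸ h1.union h2)

lemma exists_cone_extending {Q : Type*} [CommGroup Q]
    (htf : ∀ x : Q, ∀ n : ℕ, n ≠ 0 → x ^ n = 1 → x = 1) (S : Set Q)
    (hmul : ∀ a ∈ S, ∀ b ∈ S, a * b ∈ S) (h1 : (1 : Q) ∉ S) : ∃ P, S ⊆ P ∧ IsPosCone P := by
  obtain ⟨P, hSP, hP⟩ := zorn_subset_nonempty
    {T : Set Q | (∀ a ∈ T, ∀ b ∈ T, a * b ∈ T) ∧ (1 : Q) ∉ T} (by
      intro c hc hch _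
      refine ⟨⋃₀ c, ⟨?_, ?_⟩, fun s hs => Set.subset_sUnion_of_mem hs⟩
      · rintro a ⟨s, hs, ha⟩ b ⟨t, ht, hb⟩
        rcases hch.total hs ht with h | h
        · exact ⟨t, ht, (hc ht).1 _ (h ha) _ hb⟩
        · exact ⟨s, hs, (hc hs).1 _ ha _ (h hb)⟩
      · rintro ⟨s, hs, h⟩
        exact (hc hs).2 h) S ⟨hmul, h1⟩
  obtain ⟨⟨hPm, hP1⟩, hmax⟩ := hP
  have hpow : ∀ x ∈ P, ∀ n : ℕ, n ≠ 0 → x ^ n ∈ P := by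
    intro x hx n hn
    obtain ⟨m, rfl⟩ := Nat.exists_eq_succ_of_ne_zero hn
    induction m with
    | zero => simpa using hx
    | succ k ih => rw [Nat.succ_eq_add_one, pow_succ]; exact hPm _ (ih (by simp)) _ hx
  have key : ∀ x : Q, x ≠ 1 → x ∉ P → ∃ n : ℕ, n ≠ 0 ∧ (x⁻¹) ^ n ∈ P := by
    intro x hx hxP
    by_contra hcon
    push Not at hcon
    let T : Set Q := P ∪ {y | ∃ n : ℕ, n ≠ 0 ∧ (y = x ^ n ∨ ∃ p ∈ P, y = p * x ^ n)}
    have hT : T ⊆ P := hmax ⟨by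
      rintro a (ha | ⟨n, hn, rfl | ⟨p, hp, rfl⟩⟩) b (hb | ⟨k, hk, rfl | ⟨q, hq, rfl⟩⟩)
      · exact Or.inl (hPm _ ha _ hb)
      · exact Or.inr ⟨k, hk, Or.inr ⟨a, ha, rfl⟩⟩
      · exact Or.inr ⟨k, hk, Or.inr ⟨a * q, hPm _ ha _ hq, by rw [mul_assoc]⟩⟩
      · exact Or.inr ⟨n, hn, Or.inr ⟨b, hb, mul_comm _ _⟩⟩
      · exact Or.inr ⟨n + k, by omega, Or.inl (by rw [pow_add])⟩
      · exact Or.inr ⟨n + k, by omega, Or.inr ⟨q, hq, by rw [pow_add, mul_left_comm]⟩⟩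
      · exact Or.inr ⟨n, hn, Or.inr ⟨p * b, hPm _ hp _ hb, by rw [mul_right_comm]⟩⟩
      · exact Or.inr ⟨n + k, by omega, Or.inr ⟨p, hp, by rw [pow_add, mul_assoc]⟩⟩
      · exact Or.inr ⟨n + k, by omega, Or.inr ⟨p * q, hPm _ hp _ hq, by
          rw [pow_add, mul_mul_mul_comm]⟩⟩, by
      rintro (h | ⟨n, hn, h | ⟨p, hp, h⟩⟩)
      · exact hP1 h
      · exact hx (htf x n hn h.symm)
      · refine hcon n hn ?_
        have : p = x⁻¹ ^ n := by rw [inv_pow]; exact eq_inv_of_mul_eq_one_left h.symm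
        exact this ▸ hp⟩ (fun y hy => Or.inl hy)
    exact hxP (hT (Or.inr ⟨1, one_ne_zero, Or.inl (by simp)⟩))
  refine ⟨P, hSP, hPm, ?_, hP1, ?_⟩
  · intro g
    by_contra hcon
    push Not at hcon
    obtain ⟨c1, c2, c3⟩ := hcon
    obtain ⟨n, hn, hn'⟩ := key g c3 c1
    obtain ⟨k, hk, hk'⟩ := key g⁻¹ (by simpa using c3) c2
    have e1 := hpow _ hn' k hk
    have e2 := hpow _ hk' n hn
    have := hPm _ e1 _ e2
    rw [← pow_mul, ← pow_mul, mul_comm k n, ← mul_pow] at this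
    simp at this
    exact hP1 this
  · intro g hg hg'
    have := hPm _ hg _ hg'
    simp at this
    exact hP1 this

lemma not_countable_of_indep {Q : Type*} [CommGroup Q]
    (htf : ∀ x : Q, ∀ n : ℕ, n ≠ 0 → x ^ n = 1 → x = 1) (a b : Q)
    (hab : ∀ m n : ℤ, a ^ m * b ^ n = 1 → m = 0 ∧ n = 0) :
    ¬ {P : Set Q | IsPosCone P}.Countable := by
  let S : ℝ → Set Q := fun α => {x | ∃ m n : ℤ, x = a ^ m * b ^ n ∧ 0 < (m : ℝ) + n * α}
  have hS : ∀ α, ∃ P, S α ⊆ P ∧ IsPosCone P := by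
    intro α
    refine exists_cone_extending htf (S α) ?_ ?_
    · rintro _ ⟨m, n, rfl, h⟩ _ ⟨m', n', rfl, h'⟩
      refine ⟨m + m', n + n', by rw [zpow_add, zpow_add, mul_mul_mul_comm], ?_⟩
      push_cast
      linarith
    · rintro ⟨m, n, h, h'⟩
      obtain ⟨rfl, rfl⟩ := hab m n h.symm
      simp at h'
  choose f hf hf' using hS
  refine not_countable_of_irrational f (fun α _ => hf' α) ?_
  intro α β _ _ hlt he
  obtain ⟨q, hq1, hq2⟩ := exists_rat_btwn hlt
  have hd : (0 : ℝ) < q.den := by exact_mod_cast q.den_pos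
  have hq : (q : ℝ) * q.den = q.num := by exact_mod_cast Rat.mul_den_eq_num q
  have m1 : a ^ (-q.num) * b ^ (q.den : ℤ) ∈ S β := ⟨_, _, rfl, by push_cast; nlinarith⟩
  have m2 : a ^ (q.num) * b ^ (-(q.den : ℤ)) ∈ S α := ⟨_, _, rfl, by push_cast; nlinarith⟩
  have m1' := hf β m1
  have m2' := hf α m2
  rw [he] at m2'
  refine (hf' β).2.2.2 _ m1' ?_
  convert m2' using 1
  simp [mul_comm]

end partC

/-- `ι` restricts to a homomorphism from `E` to the rationals with kernel `C`. -/
structure IsRatHom {G : Type*} [Group G] (C E : Subgroup G) (ι : G → ℚ) : Prop where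
  le : C ≤ E
  map_mul : ∀ x ∈ E, ∀ y ∈ E, ι (x * y) = ι x + ι y
  ker : ∀ x ∈ E, (ι x = 0 ↔ x ∈ C)

section partD
variable {G : Type*} [Group G] {C D E : Subgroup G} {P Q : Set G}

lemma countable_quot (hle : C ≤ E) [hN : (C.subgroupOf E).Normal]
    (hc : {P : Set G | RelCone C E P}.Countable) :
    {S : Set (E ⧸ C.subgroupOf E) | IsPosCone S}.Countable := by
  refine Set.MapsTo.countable_of_injOn
    (f := fun S => {g : G | ∃ h : g ∈ E, ((⟨g, h⟩ : E) : E ⧸ C.subgroupOf E) ∈ S}) ?_ ?_ hc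
  · rintro S ⟨h1, h2, h3, h4⟩
    have hmem : ∀ (d : G) (hd : d ∈ C), ((⟨d, hle hd⟩ : E) : E ⧸ C.subgroupOf E) = 1 := by
      intro d hd
      rw [QuotientGroup.eq_one_iff, Subgroup.mem_subgroupOf]
      exact hd
    refine ⟨hle, fun x hx => hx.1, ?_, ?_, ?_, ?_, ?_⟩
    · rintro a ⟨ha, ha'⟩ b ⟨hb, hb'⟩
      exact ⟨E.mul_mem ha hb, h1 _ ha' _ hb'⟩
    · intro x hx
      rcases h2 ((⟨x, hx⟩ : E) : E ⧸ C.subgroupOf E) with h | h | h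
      · exact Or.inl ⟨hx, h⟩
      · exact Or.inr (Or.inl ⟨E.inv_mem hx, h⟩)
      · rw [QuotientGroup.eq_one_iff, Subgroup.mem_subgroupOf] at h
        exact Or.inr (Or.inr h)
    · rintro x ⟨hx, hx'⟩ hxC
      rw [hmem x hxC] at hx'
      exact h3 hx'
    · rintro d hd x ⟨hx, hx'⟩
      refine ⟨E.mul_mem (hle hd) hx, ?_⟩
      have e : ((⟨d * x, E.mul_mem (hle hd) hx⟩ : E) : E ⧸ C.subgroupOf E) =
        ((⟨d, hle hd⟩ : E) : E ⧸ C.subgroupOf E) * ((⟨x, hx⟩ : E) : E ⧸ C.subgroupOf E) := rfl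
      rw [e, hmem d hd, one_mul]; exact hx'
    · rintro d hd x ⟨hx, hx'⟩
      refine ⟨E.mul_mem hx (hle hd), ?_⟩
      have e : ((⟨x * d, E.mul_mem hx (hle hd)⟩ : E) : E ⧸ C.subgroupOf E) =
        ((⟨x, hx⟩ : E) : E ⧸ C.subgroupOf E) * ((⟨d, hle hd⟩ : E) : E ⧸ C.subgroupOf E) := rfl
      rw [e, hmem d hd, mul_one]; exact hx'
  · intro S _ T _ he
    ext q
    obtain ⟨⟨g, hg⟩, rfl⟩ := QuotientGroup.mk_surjective q
    have := Set.ext_iff.1 he g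
    constructor
    · intro h
      exact (this.1 ⟨hg, h⟩).2
    · intro h
      exact (this.2 ⟨hg, h⟩).2

lemma normal_subgroupOf (hN : ∀ x ∈ E, ∀ c ∈ C, x * c * x⁻¹ ∈ C) :
    (C.subgroupOf E).Normal := by
  constructor
  rintro ⟨c, hc⟩ hcC ⟨x, hx⟩
  rw [Subgroup.mem_subgroupOf] at *
  exact hN x hx c hcC

lemma mk_zpow_eq_one [hN : (C.subgroupOf E).Normal] (x : E) :
    ((x : E ⧸ C.subgroupOf E) = 1) ↔ (x : G) ∈ C := by
  rw [QuotientGroup.eq_one_iff, Subgroup.mem_subgroupOf]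

lemma dep_of_countable (hc : {P : Set G | RelCone C E P}.Countable) (hP : RelCone C E P)
    (hcomm : ∀ x ∈ E, ∀ y ∈ E, x * y * x⁻¹ * y⁻¹ ∈ C) {a b : G} (ha : a ∈ E) (hb : b ∈ E) :
    ∃ m n : ℤ, ¬ (m = 0 ∧ n = 0) ∧ a ^ m * b ^ n ∈ C := by
  have hN : (C.subgroupOf E).Normal := normal_subgroupOf (by
    intro x hx c hcC
    have := C.mul_mem (hcomm x hx c (hP.le hcC)) hcC
    simpa using this)
  have hcm : ∀ x y : E ⧸ C.subgroupOf E, x * y = y * x := by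
    intro x y
    obtain ⟨⟨g, hg⟩, rfl⟩ := QuotientGroup.mk_surjective x
    obtain ⟨⟨k, hk⟩, rfl⟩ := QuotientGroup.mk_surjective y
    have := (mk_zpow_eq_one (C := C) (⟨g, hg⟩ * ⟨k, hk⟩ * ⟨g, hg⟩⁻¹ * ⟨k, hk⟩⁻¹ : E)).2
      (hcomm g hg k hk)
    rw [QuotientGroup.mk_mul, QuotientGroup.mk_mul, QuotientGroup.mk_mul, QuotientGroup.mk_inv,
      QuotientGroup.mk_inv, mul_inv_eq_one, mul_inv_eq_iff_eq_mul] at this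
    exact this
  let _ : CommGroup (E ⧸ C.subgroupOf E) :=
    { (inferInstance : Group (E ⧸ C.subgroupOf E)) with mul_comm := hcm }
  by_contra hcon
  push Not at hcon
  refine not_countable_of_indep (Q := E ⧸ C.subgroupOf E) ?_
    ((⟨a, ha⟩ : E) : E ⧸ C.subgroupOf E) ((⟨b, hb⟩ : E) : E ⧸ C.subgroupOf E) ?_
    (countable_quot hP.le hc)
  · intro x n hn hx
    obtain ⟨⟨g, hg⟩, rfl⟩ := QuotientGroup.mk_surjective x
    have h1 : (((⟨g, hg⟩ : E) ^ n : E) : E ⧸ C.subgroupOf E) = 1 := hx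
    rw [mk_zpow_eq_one] at h1
    rw [mk_zpow_eq_one]
    exact hP.isolated hg hn h1
  · intro m n h
    have h1 : (((⟨a, ha⟩ : E) ^ m * (⟨b, hb⟩ : E) ^ n : E) : E ⧸ C.subgroupOf E) = 1 := h
    rw [mk_zpow_eq_one] at h1
    by_contra hmn
    exact hcon m n (fun h0 h0' => hmn ⟨h0, h0'⟩) (by simpa using h1)

lemma cone_quot (hP : RelCone C E P) [hN : (C.subgroupOf E).Normal] :
    ∃ S : Set (E ⧸ C.subgroupOf E), IsPosCone S ∧
      ∀ (g : G) (h : g ∈ E), (((⟨g, h⟩ : E) : E ⧸ C.subgroupOf E) ∈ S ↔ g ∈ P) := by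
  let S : Set (E ⧸ C.subgroupOf E) := {q | ∃ x : E, (x : G) ∈ P ∧ (x : E ⧸ C.subgroupOf E) = q}
  have hS : ∀ x : E, ((x : E ⧸ C.subgroupOf E) ∈ S ↔ (x : G) ∈ P) := by
    intro x
    constructor
    · rintro ⟨y, hy, he⟩
      rw [QuotientGroup.eq, Subgroup.mem_subgroupOf] at he
      have := hP.right _ he _ hy
      simpa using this
    · exact fun h => ⟨x, h, rfl⟩
  refine ⟨S, ⟨?_, ?_, ?_, ?_⟩, fun g h => hS ⟨g, h⟩⟩
  · rintro _ ⟨x, hx, rfl⟩ _ ⟨y, hy, rfl⟩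
    exact ⟨x * y, hP.mul _ hx _ hy, rfl⟩
  · intro q
    obtain ⟨x, rfl⟩ := QuotientGroup.mk_surjective q
    rcases hP.tot x x.2 with h | h | h
    · exact Or.inl ((hS x).2 h)
    · exact Or.inr (Or.inl ((hS x⁻¹).2 h))
    · exact Or.inr (Or.inr ((mk_zpow_eq_one x).2 h))
  · intro h
    have := (hS 1).1 h
    exact hP.disj _ this C.one_mem
  · rintro _ ⟨x, hx, rfl⟩ h
    exact hP.antisymm hx ((hS x⁻¹).1 h)

lemma exists_ratHom_of_arch (hc : {P : Set G | RelCone C E P}.Countable) (hP : RelCone C E P)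
    (hnorm : ∀ x ∈ E, ∀ c ∈ C, x * c * x⁻¹ ∈ C)
    (harch : ∀ a ∈ P, ∀ b ∈ E, ∃ n : ℕ, b⁻¹ * a ^ n ∈ P) {a : G} (ha : a ∈ P) :
    ∃ ι, IsRatHom C E ι := by
  have hN : (C.subgroupOf E).Normal := normal_subgroupOf hnorm
  obtain ⟨S, hS, hSP⟩ := cone_quot hP
  have hcm := comm_of_arch_cone hS (by
    intro x hx y
    obtain ⟨⟨g, hg⟩, rfl⟩ := QuotientGroup.mk_surjective x
    obtain ⟨⟨k, hk⟩, rfl⟩ := QuotientGroup.mk_surjective y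
    obtain ⟨n, hn⟩ := harch g ((hSP g hg).1 hx) k hk
    exact ⟨n, (hSP _ (E.mul_mem (E.inv_mem hk) (E.pow_mem hg n))).2 hn⟩)
  have hcomm : ∀ x ∈ E, ∀ y ∈ E, x * y * x⁻¹ * y⁻¹ ∈ C := by
    intro x hx y hy
    have := hcm ((⟨x, hx⟩ : E) : E ⧸ C.subgroupOf E) ((⟨y, hy⟩ : E) : E ⧸ C.subgroupOf E)
    rw [← mul_inv_eq_iff_eq_mul, ← mul_inv_eq_one] at this
    exact (mk_zpow_eq_one (C := C) ((⟨x, hx⟩ : E) * (⟨y, hy⟩ : E) * (⟨x, hx⟩ : E)⁻¹ *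
      (⟨y, hy⟩ : E)⁻¹)).1 this
  let _ : CommGroup (E ⧸ C.subgroupOf E) :=
    { (inferInstance : Group (E ⧸ C.subgroupOf E)) with mul_comm := hcm }
  have haE := hP.sub a ha
  have hiso : ∀ x ∈ E, ∀ n : ℤ, n ≠ 0 → x ^ n ∈ C → x ∈ C := by
    intro x hx n hn hxn
    refine hP.isolated hx (Int.natAbs_ne_zero.2 hn) ?_
    rcases Int.natAbs_eq n with h | h
    · rw [h, zpow_natCast] at hxn; exact hxn
    · rw [h, zpow_neg, zpow_natCast] at hxn; simpa using hxn
  obtain ⟨ι, h1, h2⟩ := exists_rat_hom (Q := E ⧸ C.subgroupOf E)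
    ((⟨a, haE⟩ : E) : E ⧸ C.subgroupOf E) (by
      intro n hn
      have h1 : (((⟨a, haE⟩ : E) ^ n : E) : E ⧸ C.subgroupOf E) = 1 := hn
      rw [mk_zpow_eq_one] at h1
      by_contra hn0
      exact hP.disj a ha (hiso a haE n hn0 (by simpa using h1))) (by
      intro x n hn hx
      obtain ⟨⟨g, hg⟩, rfl⟩ := QuotientGroup.mk_surjective x
      have h1 : (((⟨g, hg⟩ : E) ^ n : E) : E ⧸ C.subgroupOf E) = 1 := hx
      rw [mk_zpow_eq_one] at h1
      rw [mk_zpow_eq_one]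
      exact hiso g hg n hn (by simpa using h1)) (by
      intro x
      obtain ⟨⟨g, hg⟩, rfl⟩ := QuotientGroup.mk_surjective x
      obtain ⟨m, n, hmn, h⟩ := dep_of_countable hc hP hcomm hg haE
      refine ⟨m, -n, ?_, ?_⟩
      · rintro rfl
        have hn : n ≠ 0 := fun h0 => hmn ⟨rfl, h0⟩
        exact hP.disj a ha (hiso a haE n hn (by simpa using h))
      · rw [zpow_neg, eq_inv_iff_mul_eq_one]
        exact (mk_zpow_eq_one (C := C) ((⟨g, hg⟩ : E) ^ m * (⟨a, haE⟩ : E) ^ n)).2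
          (by simpa using h))
  classical
  refine ⟨fun g => if h : g ∈ E then ι ((⟨g, h⟩ : E) : E ⧸ C.subgroupOf E) else 0, hP.le, ?_, ?_⟩
  · intro x hx y hy
    rw [dif_pos hx, dif_pos hy, dif_pos (E.mul_mem hx hy), ← h1]
    rfl
  · intro x hx
    rw [dif_pos hx, h2, mk_zpow_eq_one]

lemma convCone_of_interval (h : RelCone ⊥ ⊤ P)
    (hC : ∀ x ∈ P, ∀ c ∈ C, x⁻¹ * c ∈ P → x ∈ C) : ConvCone C P := by
  intro x hx hxC c hc
  constructor
  · rcases h.tot (c * x) (Subgroup.mem_top _) with h1 | h1 | h1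
    · exact h1
    · rw [mul_inv_rev] at h1
      exact absurd (hC x hx _ (C.inv_mem hc) h1) hxC
    · rw [Subgroup.mem_bot] at h1
      exact absurd ((C.mul_mem_cancel_left hc).1 (h1 ▸ C.one_mem)) hxC
  · rcases h.tot (x * c) (Subgroup.mem_top _) with h1 | h1 | h1
    · exact h1
    · have := hC _ h1 c⁻¹ (C.inv_mem hc) (by simpa using hx)
      have h2 : x * c ∈ C := by simpa using C.inv_mem this
      exact absurd ((C.mul_mem_cancel_right hc).1 h2) hxC
    · rw [Subgroup.mem_bot] at h1
      exact absurd ((C.mul_mem_cancel_right hc).1 (h1 ▸ C.one_mem)) hxC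

lemma exists_hull (h : RelCone ⊥ ⊤ P) {H : Subgroup G} (hH : ∀ g : G, ∃ n : ℕ, n ≠ 0 ∧ g ^ n ∈ H)
    (hHP : ∀ h ∈ H, ∀ x ∈ P, h * x * h⁻¹ ∈ P) {k : G} (hkH : k ∈ H) (hk : k ∈ P) :
    ∃ I : Subgroup G, ConvCone I P ∧ ∀ x, x ∈ I ↔ ∃ n : ℕ, k ^ n * x ∈ P ∧ x⁻¹ * k ^ n ∈ P := by
  have hHP' : ∀ h ∈ H, ∀ x ∈ P, h⁻¹ * x * h ∈ P := by
    intro h hh x hx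
    simpa using hHP h⁻¹ (H.inv_mem hh) x hx
  let T : Set G := {x | ∃ n : ℕ, k ^ n * x ∈ P ∧ x⁻¹ * k ^ n ∈ P}
  have hmul : ∀ x ∈ T, ∀ y ∈ T, x * y ∈ T := by
    rintro x ⟨n, hn1, hn2⟩ y ⟨m, hm1, hm2⟩
    refine ⟨m + n, ?_, ?_⟩
    · have := h.mul _ (hHP (k ^ m) (H.pow_mem hkH m) _ hn1) _ hm1
      convert this using 1
      rw [pow_add]; group
    · have := h.mul _ hm2 _ (hHP' (k ^ m) (H.pow_mem hkH m) _ hn2)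
      convert this using 1
      rw [add_comm m n, pow_add]; group
  have hone : (1 : G) ∈ T := ⟨1, by simpa using hk, by simpa using hk⟩
  have hpow : ∀ x ∈ T, ∀ n : ℕ, x ^ n ∈ T := by
    intro x hx n
    induction n with
    | zero => simpa using hone
    | succ j ih => rw [pow_succ]; exact hmul _ ih _ hx
  let I : Subgroup G :=
    { carrier := T
      one_mem' := hone
      mul_mem' := fun {a b} ha hb => hmul a ha b hb
      inv_mem' := by
        intro x hx
        obtain ⟨N, hN, hNH⟩ := hH x
        obtain ⟨n, hn1, hn2⟩ := hpow x hx N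
        have hF : (x ^ N)⁻¹ ∈ T := by
          refine ⟨n, ?_, ?_⟩
          · have := hHP _ hNH _ hn2
            simpa [mul_assoc] using this
          · have := hHP' (k ^ n) (H.pow_mem hkH n) _ hn1
            simpa [mul_assoc] using this
        have := hmul _ (hpow x hx (N - 1)) _ hF
        convert this using 1
        obtain ⟨M, rfl⟩ := Nat.exists_eq_succ_of_ne_zero hN
        simp only [Nat.succ_eq_add_one, Nat.add_sub_cancel]
        rw [pow_succ']
        group }
  refine ⟨I, ?_, fun x => Iff.rfl⟩
  refine convCone_of_interval h ?_
  rintro x hx c ⟨n, hn1, hn2⟩ hxc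
  refine ⟨n + 1, h.mul _ (h.pow_mem hk (by simp)) _ hx, ?_⟩
  have := h.mul _ (h.mul _ hxc _ hn2) _ hk
  convert this using 1
  rw [pow_succ]; group

lemma exists_ratHom_of_jump (hcount : {P : Set G | RelCone ⊥ ⊤ P}.Countable)
    (h : RelCone ⊥ ⊤ P) {H : Subgroup G} (hH : ∀ g : G, ∃ n : ℕ, n ≠ 0 ∧ g ^ n ∈ H)
    (hHP : ∀ h ∈ H, ∀ x ∈ P, h * x * h⁻¹ ∈ P) (hC : ConvCone C P) (hE : ConvCone E P) (hlt : C < E)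
    (hjump : ∀ F, ConvCone F P → C ≤ F → F ≤ E → F = C ∨ F = E) : ∃ ι, IsRatHom C E ι := by
  have hHP' : ∀ h ∈ H, ∀ x ∈ P, h⁻¹ * x * h ∈ P := by
    intro h hh x hx
    simpa using hHP h⁻¹ (H.inv_mem hh) x hx
  have hR : RelCone C ⊤ (P \ C) := h.diff le_top hC
  have hR' : RelCone C E ((P \ C) ∩ E) := hR.inter hlt.le le_top
  have hcE : {P : Set G | RelCone C E P}.Countable := by
    have h1 : {P : Set G | RelCone ⊥ E P}.Countable :=
      countable_lower hcount (h.diff le_top hE)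
    exact countable_upper h1 (h.inter bot_le (le_top : C ≤ ⊤))
  -- every positive element of `H ∩ E` outside `C` is cofinal
  have hcof : ∀ k ∈ H, k ∈ P → k ∈ E → k ∉ C → ∀ x ∈ E,
      ∃ n : ℕ, k ^ n * x ∈ P ∧ x⁻¹ * k ^ n ∈ P := by
    intro k hkH hkP hkE hkC x hx
    obtain ⟨I, hI, hIx⟩ := exists_hull h hH hHP hkH hkP
    rw [← hIx]
    have hkI : k ∈ I := (hIx k).2 ⟨2, h.mul _ (h.pow_mem hkP (by simp)) _ hkP, by
      rw [pow_two, inv_mul_cancel_left]; exact hkP⟩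
    rcases hI.total h hE with h1 | h1
    · rcases hI.total h hC with h2 | h2
      · exact absurd (h2 hkI) hkC
      · rcases hjump I hI h2 h1 with h3 | h3
        · exact absurd (h3 ▸ hkI) hkC
        · exact h3 ▸ hx
    · exact h1 hx
  have hconj : ∀ k ∈ H, k ∈ P → k ∈ E → k ∉ C → ∀ x ∈ E, x * k * x⁻¹ ∉ C := by
    intro k hkH hkP hkE hkC x hx hcon
    obtain ⟨n, hn, -⟩ := hcof k hkH hkP hkE hkC x hx
    obtain ⟨m, hm, -⟩ := hcof k hkH hkP hkE hkC x⁻¹ (E.inv_mem hx)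
    have h1 := h.mul _ (hHP' (k ^ (n + 1)) (H.pow_mem hkH _) _ hn) _ hm
    have h2 : k * ((k ^ (n + 1))⁻¹ * (k ^ n * x) * k ^ (n + 1) * (k ^ m * x⁻¹)) =
        (x * k * x⁻¹) ^ (n + 1 + m) := by
      rw [conj_pow, pow_add, pow_succ']
      group
    exact hkC (hC.of_mul h hkP h1 (h2 ▸ C.pow_mem hcon _))
  have hiso : ∀ x : G, ∀ n : ℕ, n ≠ 0 → x ^ n ∈ C → x ∈ C :=
    fun x n hn hx => hR.isolated (Subgroup.mem_top x) hn hx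
  have hnorm : ∀ x ∈ E, ∀ c ∈ C, x * c * x⁻¹ ∈ C := by
    intro x hx c hc
    by_contra hcon
    obtain ⟨N, hN, hNH⟩ := hH (x * c * x⁻¹)
    have hnC : (x * c * x⁻¹) ^ N ∉ C := fun h => hcon (hiso _ N hN h)
    have hmE : (x * c * x⁻¹) ^ N ∈ E :=
      E.pow_mem (E.mul_mem (E.mul_mem hx (hlt.le hc)) (E.inv_mem hx)) N
    have he : x⁻¹ * (x * c * x⁻¹) ^ N * x⁻¹⁻¹ = c ^ N := by
      rw [conj_pow]; group
    have he' : x⁻¹ * ((x * c * x⁻¹) ^ N)⁻¹ * x⁻¹⁻¹ = (c ^ N)⁻¹ := by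
      rw [conj_pow]; group
    rcases h.tot _ (Subgroup.mem_top ((x * c * x⁻¹) ^ N)) with h1 | h1 | h1
    · exact hconj _ hNH h1 hmE hnC x⁻¹ (E.inv_mem hx) (he ▸ C.pow_mem hc N)
    · exact hconj _ (H.inv_mem hNH) h1 (E.inv_mem hmE) (fun h => hnC (inv_mem_iff.1 h)) x⁻¹
        (E.inv_mem hx) (he' ▸ C.inv_mem (C.pow_mem hc N))
    · rw [Subgroup.mem_bot] at h1
      exact hnC (h1 ▸ C.one_mem)
  have harch : ∀ a ∈ (P \ C) ∩ E, ∀ b ∈ E, ∃ n : ℕ, b⁻¹ * a ^ n ∈ (P \ C) ∩ E := by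
    rintro a ⟨⟨haP, haC⟩, haE⟩ b hb
    obtain ⟨N, hN, hNH⟩ := hH a
    obtain ⟨n, -, hn⟩ := hcof _ hNH (h.pow_mem haP hN) (E.pow_mem haE N)
      (fun h => haC (hiso _ N hN h)) b hb
    rw [← pow_mul] at hn
    by_cases hbC : b⁻¹ * a ^ (N * n) ∈ C
    · refine ⟨N * n + 1, ?_⟩
      rw [pow_succ, ← mul_assoc]
      exact hR'.left _ hbC _ ⟨⟨haP, haC⟩, haE⟩
    · exact ⟨N * n, ⟨hn, hbC⟩, E.mul_mem (E.inv_mem hb) (E.pow_mem haE _)⟩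
  obtain ⟨a, haE, haC⟩ := SetLike.exists_of_lt hlt
  rcases hR'.tot a haE with h1 | h1 | h1
  · exact exists_ratHom_of_arch hcE hR' hnorm harch h1
  · exact exists_ratHom_of_arch hcE hR' hnorm harch h1
  · exact absurd h1 haC

end partD

section partE
variable {G : Type*} [Group G] {C D E : Subgroup G} {P Q R : Set G} {ι κ : G → ℚ}

lemma rat_dep (u v : ℚ) (hv : v ≠ 0) : ∃ (n : ℕ) (m : ℤ), n ≠ 0 ∧ n * u = m * v ∧
    (u * v < 0 → m < 0) ∧ (u ≠ 0 → m ≠ 0) := by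
  have hd : ((u / v).den : ℚ) ≠ 0 := by exact_mod_cast (u / v).den_ne_zero
  have h : (u / v) * (u / v).den = (u / v).num := Rat.mul_den_eq_num _
  refine ⟨(u / v).den, (u / v).num, (u / v).den_ne_zero, ?_, ?_, ?_⟩
  · rw [← h]; field_simp
  · intro huv
    rw [Rat.num_neg]
    rcases mul_neg_iff.1 huv with ⟨h1, h2⟩ | ⟨h1, h2⟩
    · exact div_neg_of_pos_of_neg h1 h2
    · exact div_neg_of_neg_of_pos h1 h2
  · intro hu
    rw [Ne, Rat.num_eq_zero]
    exact div_ne_zero hu hv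

namespace IsRatHom

lemma map_one (h : IsRatHom C E ι) : ι 1 = 0 := (h.ker 1 E.one_mem).2 C.one_mem

lemma map_inv (h : IsRatHom C E ι) {x : G} (hx : x ∈ E) : ι x⁻¹ = - ι x := by
  have := h.map_mul x hx x⁻¹ (E.inv_mem hx)
  rw [mul_inv_cancel, h.map_one] at this
  linarith

lemma map_pow (h : IsRatHom C E ι) {x : G} (hx : x ∈ E) (n : ℕ) : ι (x ^ n) = n * ι x := by
  induction n with
  | zero => simp [h.map_one]
  | succ k ih => rw [pow_succ, h.map_mul _ (E.pow_mem hx k) _ hx, ih]; push_cast; ring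

lemma map_zpow (h : IsRatHom C E ι) {x : G} (hx : x ∈ E) (n : ℤ) : ι (x ^ n) = n * ι x := by
  rcases Int.eq_nat_or_neg n with ⟨k, rfl | rfl⟩
  · rw [zpow_natCast, h.map_pow hx]; simp
  · rw [zpow_neg, zpow_natCast, h.map_inv (E.pow_mem hx k), h.map_pow hx]; simp

lemma map_conj (h : IsRatHom C E ι) {x y : G} (hx : x ∈ E) (hy : y ∈ E) :
    ι (x * y * x⁻¹) = ι y := by
  rw [h.map_mul _ (E.mul_mem hx hy) _ (E.inv_mem hx), h.map_mul _ hx _ hy, h.map_inv hx]; ring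

lemma normal (h : IsRatHom C E ι) {x c : G} (hx : x ∈ E) (hc : c ∈ C) : x * c * x⁻¹ ∈ C := by
  have hcE := h.le hc
  rw [← h.ker _ (E.mul_mem (E.mul_mem hx hcE) (E.inv_mem hx)), h.map_conj hx hcE, h.ker _ hcE]
  exact hc

lemma comm (h : IsRatHom C E ι) {x y : G} (hx : x ∈ E) (hy : y ∈ E) : x * y * x⁻¹ * y⁻¹ ∈ C := by
  have h1 := E.mul_mem (E.mul_mem hx hy) (E.inv_mem hx)
  rw [← h.ker _ (E.mul_mem h1 (E.inv_mem hy)), h.map_mul _ h1 _ (E.inv_mem hy), h.map_conj hx hy,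
    h.map_inv hy]
  ring

lemma same_sign (h : IsRatHom D C ι) (hR : RelCone D C R) {c e : G} (hc : c ∈ R) (he : e ∈ R) :
    0 < ι c * ι e := by
  have hc0 : ι c ≠ 0 := fun h0 => hR.disj c hc ((h.ker c (hR.sub c hc)).1 h0)
  have he0 : ι e ≠ 0 := fun h0 => hR.disj e he ((h.ker e (hR.sub e he)).1 h0)
  by_contra hcon
  have hneg : ι c * ι e < 0 := lt_of_le_of_ne (not_lt.1 hcon) (mul_ne_zero hc0 he0)
  obtain ⟨n, m, hn, hnm, hm, -⟩ := rat_dep (ι c) (ι e) he0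
  have hm' := hm hneg
  obtain ⟨k, hk⟩ : ∃ k : ℕ, m = -(k : ℤ) := ⟨m.natAbs, by omega⟩
  have hk0 : k ≠ 0 := by omega
  have hcC := hR.sub c hc
  have heC := hR.sub e he
  have hmem := hR.mul _ (hR.pow_mem hc hn) _ (hR.pow_mem he hk0)
  refine hR.disj _ hmem ((h.ker _ (hR.sub _ hmem)).1 ?_)
  rw [h.map_mul _ (C.pow_mem hcC n) _ (C.pow_mem heC k), h.map_pow hcC, h.map_pow heC, hnm, hk]
  push_cast; ring

lemma finite_cones (h : IsRatHom D C ι) : {R : Set G | RelCone D C R}.Finite := by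
  refine (Set.toFinite ({∅, {x | x ∈ C ∧ 0 < ι x}, {x | x ∈ C ∧ ι x < 0}} : Set (Set G))).subset ?_
  intro R hR
  have hR : RelCone D C R := hR
  simp only [Set.mem_insert_iff, Set.mem_singleton_iff]
  rcases R.eq_empty_or_nonempty with he | ⟨r, hr⟩
  · exact Or.inl he
  right
  have h0 := h.same_sign hR hr hr
  have hr0 : ι r ≠ 0 := fun h => by rw [h] at h0; simp at h0
  rcases lt_or_gt_of_ne hr0 with hlt | hlt
  · right
    ext x
    constructor
    · intro hx
      refine ⟨hR.sub x hx, ?_⟩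
      have := h.same_sign hR hr hx
      exact neg_of_mul_pos_right this hlt.le
    · rintro ⟨hx, hx'⟩
      rcases hR.tot x hx with h1 | h1 | h1
      · exact h1
      · have := h.same_sign hR hr h1
        rw [h.map_inv hx] at this
        nlinarith
      · rw [← h.ker x hx] at h1
        linarith
  · left
    ext x
    constructor
    · intro hx
      refine ⟨hR.sub x hx, ?_⟩
      have := h.same_sign hR hr hx
      exact pos_of_mul_pos_right this hlt.le
    · rintro ⟨hx, hx'⟩
      rcases hR.tot x hx with h1 | h1 | h1
      · exact h1
      · have := h.same_sign hR hr h1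
        rw [h.map_inv hx] at this
        nlinarith
      · rw [← h.ker x hx] at h1
        linarith

/-- Conjugation acts on `C / D` by scaling. -/
lemma scale (h : IsRatHom D C ι) {g : G} (hgC : ∀ c ∈ C, g * c * g⁻¹ ∈ C)
    (hgD : ∀ c ∈ D, g * c * g⁻¹ ∈ D) {c e : G} (hc : c ∈ C) (he : e ∈ C) :
    ι (g * c * g⁻¹) * ι e = ι c * ι (g * e * g⁻¹) := by
  by_cases he0 : ι e = 0
  · have h1 := (h.ker e he).1 he0
    rw [(h.ker _ (hgC e he)).2 (hgD e h1), he0]; simp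
  obtain ⟨n, m, hn, hnm, -, -⟩ := rat_dep (ι c) (ι e) he0
  have h1 : c ^ n * (e ^ m)⁻¹ ∈ D := by
    rw [← h.ker _ (C.mul_mem (C.pow_mem hc n) (C.inv_mem (C.zpow_mem he m))),
      h.map_mul _ (C.pow_mem hc n) _ (C.inv_mem (C.zpow_mem he m)), h.map_inv (C.zpow_mem he m),
      h.map_pow hc, h.map_zpow he, hnm]
    ring
  have h2 := hgD _ h1
  have e1 : g * (c ^ n * (e ^ m)⁻¹) * g⁻¹ = (g * c * g⁻¹) ^ n * ((g * e * g⁻¹) ^ m)⁻¹ := by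
    rw [conj_pow, conj_zpow]; group
  have hc' := hgC c hc
  have he' := hgC e he
  rw [e1, ← h.ker _ (C.mul_mem (C.pow_mem hc' n) (C.inv_mem (C.zpow_mem he' m))),
      h.map_mul _ (C.pow_mem hc' n) _ (C.inv_mem (C.zpow_mem he' m)),
      h.map_inv (C.zpow_mem he' m), h.map_pow hc', h.map_zpow he'] at h2
  have hn' : (n : ℚ) ≠ 0 := by exact_mod_cast hn
  apply mul_left_cancel₀ hn'
  linear_combination ι e * h2 - ι (g * e * g⁻¹) * hnm

end IsRatHom

lemma ConvCone.trans (hC : ConvCone C Q) (hD : ConvCone D (Q ∩ C)) (hle : D ≤ C) :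
    ConvCone D Q := by
  intro x hx hxD c hc
  by_cases hxC : x ∈ C
  · have := hD x ⟨hx, hxC⟩ hxD c hc
    exact ⟨this.1.1, this.2.1⟩
  · exact hC x hx hxC c (hle hc)

lemma conv_of_reversing (hι : IsRatHom D C ι) (hκ : IsRatHom C E κ)
    (hDn : ∀ g ∈ E, ∀ d ∈ D, g * d * g⁻¹ ∈ D) (hQ : RelCone ⊥ E Q) (hD : ConvCone D (Q ∩ C))
    {g c₀ : G} (hg : g ∈ E) (hc₀ : c₀ ∈ C) (hrev : ι (g * c₀ * g⁻¹) * ι c₀ < 0) :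
    ConvCone C Q := by
  wlog hgQ : g ∈ Q generalizing g c₀
  · rcases hQ.tot g hg with h1 | h1 | h1
    · exact absurd h1 hgQ
    · refine this (g := g⁻¹) (c₀ := g * c₀ * g⁻¹) (E.inv_mem hg) (hκ.normal hg hc₀) ?_ h1
      have e : g⁻¹ * (g * c₀ * g⁻¹) * g⁻¹⁻¹ = c₀ := by group
      rw [e, mul_comm]; exact hrev
    · rw [Subgroup.mem_bot] at h1
      subst h1
      simp at hrev
      nlinarith
  have hgi : g⁻¹ ∈ E := E.inv_mem hg
  have hR : RelCone D C ((Q ∩ C) \ D) := (hQ.inter bot_le hκ.le).diff hι.le hD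
  have hc₀D : c₀ ∉ D := by
    intro h
    rw [← hι.ker c₀ hc₀] at h
    rw [h] at hrev; simp at hrev
  have hgC : g ∉ C := by
    intro h
    rw [hι.map_conj h hc₀] at hrev
    nlinarith
  have hrev' : ∀ c ∈ C, ι (g⁻¹ * c * g) * ι c ≤ 0 := by
    intro c hc
    have hs := hι.scale (g := g⁻¹) (fun c hc => hκ.normal hgi hc) (hDn _ hgi) hc
      (hκ.normal hg hc₀)
    have e : g⁻¹ * (g * c₀ * g⁻¹) * g⁻¹⁻¹ = c₀ := by group
    rw [e, inv_inv] at hs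
    have h1 : ι (g⁻¹ * c * g) * ι c * (ι (g * c₀ * g⁻¹) * ι c₀) = (ι c * ι c₀) ^ 2 := by
      linear_combination ι c * ι c₀ * hs
    by_contra hcon
    push Not at hcon
    nlinarith [mul_neg_of_pos_of_neg hcon hrev, sq_nonneg (ι c * ι c₀)]
  have claim1 : ∀ e ∈ C, e ∉ D → g⁻¹ * e ∉ Q := by
    intro e he heD hcon
    have h1 : e ∈ Q := by simpa using hQ.mul _ hgQ _ hcon
    have h2 : g⁻¹ * e * g ∈ Q := hQ.mul _ hcon _ hgQ
    have h3 : g⁻¹ * e * g ∈ C := by simpa using hκ.normal hgi he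
    have h4 : g⁻¹ * e * g ∉ D := by
      intro h
      have := hDn g hg _ h
      apply heD
      convert this using 1
      group
    have := hι.same_sign hR (c := g⁻¹ * e * g) (e := e) ⟨⟨h2, h3⟩, h4⟩ ⟨⟨h1, he⟩, heD⟩
    exact absurd this (not_lt.2 (hrev' e he))
  have claim2 : ∀ c ∈ C, g⁻¹ * c ∉ Q := by
    intro c hc hcon
    by_cases hcD : c ∈ D
    · obtain ⟨e, he⟩ : ∃ e, e ∈ (Q ∩ C) \ D := by
        rcases hR.tot c₀ hc₀ with h1 | h1 | h1
        · exact ⟨_, h1⟩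
        · exact ⟨_, h1⟩
        · exact absurd h1 hc₀D
      have h1 := hR.left _ (D.inv_mem hcD) e he
      refine claim1 e he.1.2 he.2 ?_
      have := hQ.mul _ hcon _ h1.1.1
      simpa [mul_assoc] using this
    · exact claim1 c hc hcD hcon
  have claim3 : ∀ c ∈ C, c * g ∈ Q := by
    intro c hc
    rcases hQ.tot (c * g) (E.mul_mem (hκ.le hc) hg) with h1 | h1 | h1
    · exact h1
    · rw [mul_inv_rev] at h1
      exact absurd h1 (claim2 _ (C.inv_mem hc))
    · rw [Subgroup.mem_bot] at h1
      exact absurd ((C.mul_mem_cancel_left hc).1 (h1 ▸ C.one_mem)) hgC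
  have claim4 : ∀ x ∈ E, ∀ m : ℕ, m ≠ 0 → κ x = m * κ g → x ∈ Q := by
    intro x hx m hm hxm
    obtain ⟨k, rfl⟩ := Nat.exists_eq_succ_of_ne_zero hm
    have hgk := E.pow_mem hg (k + 1)
    have hcm : x * (g ^ (k + 1))⁻¹ ∈ C := by
      rw [← hκ.ker _ (E.mul_mem hx (E.inv_mem hgk)), hκ.map_mul _ hx _ (E.inv_mem hgk),
        hκ.map_inv hgk, hκ.map_pow hg, hxm]
      push_cast; ring
    have h1 := claim3 _ hcm
    have e : x = x * (g ^ (k + 1))⁻¹ * g * g ^ k := by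
      rw [pow_succ']; group
    rw [e]
    rcases Nat.eq_zero_or_pos k with h0 | h0
    · subst h0; simpa using h1
    · exact hQ.mul _ h1 _ (hQ.pow_mem hgQ h0.ne')
  have hκg : κ g ≠ 0 := fun h => hgC ((hκ.ker g hg).1 h)
  have claim5 : ∀ x ∈ Q, x ∉ C → ∀ c ∈ C, c * x ∈ Q := by
    intro x hx hxC c hc
    have hxE := hQ.sub x hx
    have hcE := hκ.le hc
    have hcxE := E.mul_mem hcE hxE
    rcases hQ.tot (c * x) hcxE with h1 | h1 | h1
    · exact h1
    · exfalso
      have hκx : κ x ≠ 0 := fun h => hxC ((hκ.ker x hxE).1 h)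
      obtain ⟨n, m, hn, hnm, -, hm⟩ := rat_dep (κ x) (κ g) hκg
      have hm' := hm hκx
      have hκc : κ c = 0 := (hκ.ker c hcE).2 hc
      rcases lt_or_gt_of_ne hm' with hneg | hpos
      · have h2 := claim4 (x ^ n)⁻¹ (E.inv_mem (E.pow_mem hxE n)) m.natAbs (by omega) (by
          have hab : ((m.natAbs : ℕ) : ℚ) = -(m : ℚ) := by
            rw [Nat.cast_natAbs, abs_of_neg hneg, Int.cast_neg]
          rw [hκ.map_inv (E.pow_mem hxE n), hκ.map_pow hxE, hnm, hab]; ring)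
        exact hQ.antisymm (hQ.pow_mem hx hn) h2
      · have h2 := claim4 ((c * x) ^ n) (E.pow_mem hcxE n) m.natAbs (by omega) (by
          have hab : ((m.natAbs : ℕ) : ℚ) = (m : ℚ) := by
            rw [Nat.cast_natAbs, abs_of_pos hpos]
          rw [hκ.map_pow hcxE, hκ.map_mul _ hcE _ hxE, hκc, hab, zero_add, hnm])
        have h3 := hQ.pow_mem h1 hn
        rw [inv_pow] at h3
        exact hQ.antisymm h2 h3
    · rw [Subgroup.mem_bot] at h1
      exact absurd ((C.mul_mem_cancel_left hc).1 (h1 ▸ C.one_mem)) hxC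
  intro x hx hxC c hc
  refine ⟨claim5 x hx hxC c hc, ?_⟩
  have := claim5 x hx hxC _ (hκ.normal (hQ.sub x hx) hc)
  simpa using this

end partE

section partF
variable {G : Type*} [Group G] {C D E : Subgroup G} {P Q R : Set G} {ι κ : G → ℚ}

lemma exists_scale (hι : IsRatHom D C ι) (hκ : IsRatHom C E κ)
    (hDn : ∀ g ∈ E, ∀ d ∈ D, g * d * g⁻¹ ∈ D)
    (hnr : ∀ g ∈ E, ∀ c ∈ C, ¬ ι (g * c * g⁻¹) * ι c < 0)
    {c₀ : G} (hc₀ : c₀ ∈ C) (hc₀D : c₀ ∉ D) :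
    ∃ L : G → ℚ, (∀ g ∈ E, 0 < L g) ∧ (∀ g ∈ E, ∀ c ∈ C, ι (g * c * g⁻¹) = L g * ι c) ∧
      (∀ g ∈ E, ∀ h ∈ E, L (g * h) = L g * L h) ∧ (∀ c ∈ C, L c = 1) := by
  have h0 : ι c₀ ≠ 0 := fun h => hc₀D ((hι.ker _ hc₀).1 h)
  have hsc : ∀ g ∈ E, ∀ c ∈ C, ι (g * c * g⁻¹) = ι (g * c₀ * g⁻¹) / ι c₀ * ι c := by
    intro g hg c hc
    have := hι.scale (g := g) (fun c hc => hκ.normal hg hc) (hDn g hg) hc hc₀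
    field_simp
    linarith
  refine ⟨fun g => ι (g * c₀ * g⁻¹) / ι c₀, ?_, hsc, ?_, ?_⟩
  · intro g hg
    have hne : ι (g * c₀ * g⁻¹) ≠ 0 := by
      intro h
      have h1 := hDn _ (E.inv_mem hg) _ ((hι.ker _ (hκ.normal hg hc₀)).1 h)
      apply hc₀D
      have e : g⁻¹ * (g * c₀ * g⁻¹) * g⁻¹⁻¹ = c₀ := by group
      rwa [e] at h1
    have h1 : 0 < ι (g * c₀ * g⁻¹) * ι c₀ :=
      lt_of_le_of_ne (not_lt.1 (hnr g hg c₀ hc₀)) (mul_ne_zero hne h0).symm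
    have e : ι (g * c₀ * g⁻¹) / ι c₀ = ι (g * c₀ * g⁻¹) * ι c₀ / (ι c₀ * ι c₀) := by field_simp
    show 0 < ι (g * c₀ * g⁻¹) / ι c₀
    rw [e]
    exact div_pos h1 (mul_self_pos.2 h0)
  · intro g hg h hh
    have h1 := hsc g hg _ (hκ.normal hh hc₀)
    have e : g * (h * c₀ * h⁻¹) * g⁻¹ = g * h * c₀ * (g * h)⁻¹ := by group
    rw [e] at h1
    show ι (g * h * c₀ * (g * h)⁻¹) / ι c₀ = _
    rw [h1]; ring
  · intro c hc
    show ι (c * c₀ * c⁻¹) / ι c₀ = 1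
    rw [hι.map_conj hc hc₀, div_self h0]

lemma comm_add {L : G → ℚ} (hι : IsRatHom D C ι) (hκ : IsRatHom C E κ)
    (hL : ∀ g ∈ E, ∀ c ∈ C, ι (g * c * g⁻¹) = L g * ι c)
    {x z y : G} (hx : x ∈ E) (hz : z ∈ E) (hy : y ∈ E) :
    ι (x * z * y * (x * z)⁻¹ * y⁻¹) = L x * ι (z * y * z⁻¹ * y⁻¹) + ι (x * y * x⁻¹ * y⁻¹) := by
  have h1 := hκ.comm hz hy
  rw [← hL x hx _ h1, ← hι.map_mul _ (hκ.normal hx h1) _ (hκ.comm hx hy)]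
  congr 1; group

lemma comm_left {L : G → ℚ} (hι : IsRatHom D C ι) (hκ : IsRatHom C E κ)
    (hL : ∀ g ∈ E, ∀ c ∈ C, ι (g * c * g⁻¹) = L g * ι c)
    {c y : G} (hc : c ∈ C) (hy : y ∈ E) :
    ι (c * y * c⁻¹ * y⁻¹) = (1 - L y) * ι c := by
  have h1 := hκ.normal hy (C.inv_mem hc)
  have e : c * y * c⁻¹ * y⁻¹ = c * (y * c⁻¹ * y⁻¹) := by group
  rw [e, hι.map_mul _ hc _ h1, hL y hy _ (C.inv_mem hc), hι.map_inv hc]; ring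

/-- elements outside `C` are commensurable modulo `C`. -/
lemma exists_commens (hκ : IsRatHom C E κ) {x y : G} (hx : x ∈ E) (hy : y ∈ E) (hyC : y ∉ C) :
    ∃ (n : ℕ) (m : ℤ) (c : G), n ≠ 0 ∧ c ∈ C ∧ x ^ n = c * y ^ m := by
  have hy0 : κ y ≠ 0 := fun h => hyC ((hκ.ker y hy).1 h)
  obtain ⟨n, m, hn, hnm, -, -⟩ := rat_dep (κ x) (κ y) hy0
  have h1 := E.pow_mem hx n
  have h2 := E.zpow_mem hy m
  refine ⟨n, m, x ^ n * (y ^ m)⁻¹, hn, ?_, by group⟩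
  rw [← hκ.ker _ (E.mul_mem h1 (E.inv_mem h2)), hκ.map_mul _ h1 _ (E.inv_mem h2), hκ.map_inv h2,
    hκ.map_pow hx, hκ.map_zpow hy, hnm]
  ring

lemma not_countable_of_abelian {L : G → ℚ} (hι : IsRatHom D C ι) (hκ : IsRatHom C E κ)
    (hL : ∀ g ∈ E, ∀ c ∈ C, ι (g * c * g⁻¹) = L g * ι c) (hL1 : ∀ g ∈ E, L g = 1)
    (hDC : D < C) (hCE : C < E) (hP : RelCone D E P) :
    ¬ {P : Set G | RelCone D E P}.Countable := by
  intro hcount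
  have hadd : ∀ x ∈ E, ∀ z ∈ E, ∀ y ∈ E,
      ι (x * z * y * (x * z)⁻¹ * y⁻¹) = ι (z * y * z⁻¹ * y⁻¹) + ι (x * y * x⁻¹ * y⁻¹) := by
    intro x hx z hz y hy
    rw [comm_add hι hκ hL hx hz hy, hL1 x hx, one_mul]
  have hzero : ∀ x ∈ E, ∀ y ∈ E, ι (x * y * x⁻¹ * y⁻¹) = 0 := by
    intro x hx y hy
    by_cases hyC : y ∈ C
    · rw [hι.map_mul _ (hκ.normal hx hyC) _ (C.inv_mem hyC), hL x hx y hyC, hL1 x hx,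
        hι.map_inv hyC]
      ring
    · obtain ⟨n, m, c, hn, hc, e⟩ := exists_commens hκ hx hy hyC
      have hpow : ∀ k : ℕ, ι (x ^ k * y * (x ^ k)⁻¹ * y⁻¹) = k * ι (x * y * x⁻¹ * y⁻¹) := by
        intro k
        induction k with
        | zero => simp [hι.map_one]
        | succ k ih =>
          rw [pow_succ, hadd _ (E.pow_mem hx k) _ hx _ hy, ih]; push_cast; ring
      have h1 := hpow n
      rw [e, hadd _ (hκ.le hc) _ (E.zpow_mem hy m) _ hy, comm_left hι hκ hL hc hy, hL1 y hy] at h1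
      have e2 : y ^ m * y * (y ^ m)⁻¹ * y⁻¹ = 1 := by group
      rw [e2, hι.map_one] at h1
      have hn' : (n : ℚ) ≠ 0 := by exact_mod_cast hn
      have h2 : (n : ℚ) * ι (x * y * x⁻¹ * y⁻¹) = 0 := by linarith
      exact (mul_eq_zero.1 h2).resolve_left hn'
  obtain ⟨c₀, hc₀, hc₀D⟩ := SetLike.exists_of_lt hDC
  obtain ⟨g, hg, hgC⟩ := SetLike.exists_of_lt hCE
  obtain ⟨m, n, hmn, hD⟩ := dep_of_countable hcount hP
    (fun x hx y hy => (hι.ker _ (hκ.comm hx hy)).1 (hzero x hx y hy)) (hκ.le hc₀) hg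
  have hc0m := C.zpow_mem hc₀ m
  have hgn : g ^ n ∈ C := (C.mul_mem_cancel_left hc0m).1 (hι.le hD)
  rw [← hκ.ker _ (E.zpow_mem hg n), hκ.map_zpow hg] at hgn
  have hg0 : κ g ≠ 0 := fun h => hgC ((hκ.ker g hg).1 h)
  have hn0 : n = 0 := by exact_mod_cast (mul_eq_zero.1 hgn).resolve_right hg0
  subst hn0
  rw [zpow_zero, mul_one, ← hι.ker _ hc0m, hι.map_zpow hc₀] at hD
  have hc0 : ι c₀ ≠ 0 := fun h => hc₀D ((hι.ker _ hc₀).1 h)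
  have hm0 : m = 0 := by exact_mod_cast (mul_eq_zero.1 hD).resolve_right hc0
  exact hmn ⟨hm0, rfl⟩

lemma not_countable_of_affine {L : G → ℚ} (hι : IsRatHom D C ι) (hκ : IsRatHom C E κ)
    (hDn : ∀ g ∈ E, ∀ d ∈ D, g * d * g⁻¹ ∈ D)
    (hL : ∀ g ∈ E, ∀ c ∈ C, ι (g * c * g⁻¹) = L g * ι c) (hpos : ∀ g ∈ E, 0 < L g)
    (hmul : ∀ g ∈ E, ∀ h ∈ E, L (g * h) = L g * L h) (hLC : ∀ c ∈ C, L c = 1)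
    {g₀ : G} (hg₀ : g₀ ∈ E) (hgt : 1 < L g₀) {c₀ : G} (hc₀ : c₀ ∈ C) (hc₀p : 0 < ι c₀) :
    ¬ {P : Set G | RelCone D E P}.Countable := by
  have hne : 1 - L g₀ ≠ 0 := by linarith
  obtain ⟨T, hT⟩ : ∃ T : G → ℚ, ∀ g, T g = ι (g * g₀ * g⁻¹ * g₀⁻¹) / (1 - L g₀) :=
    ⟨_, fun _ => rfl⟩
  have hTmul : ∀ g ∈ E, ∀ h ∈ E, T (g * h) = L g * T h + T g := by
    intro g hg h hh
    rw [hT, hT, hT, comm_add hι hκ hL hg hh hg₀]; ring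
  have hTC : ∀ c ∈ C, T c = ι c := by
    intro c hc
    rw [hT, comm_left hι hκ hL hc hg₀]; field_simp
  have hpow : ∀ n : ℕ, L (g₀ ^ n) = L g₀ ^ n ∧ T (g₀ ^ n) = 0 := by
    intro n
    induction n with
    | zero => simp [hLC 1 C.one_mem, hTC 1 C.one_mem, hι.map_one]
    | succ k ih =>
      rw [pow_succ, hmul _ (E.pow_mem hg₀ k) _ hg₀, hTmul _ (E.pow_mem hg₀ k) _ hg₀, ih.1, ih.2]
      refine ⟨(pow_succ _ _).symm, ?_⟩
      rw [hT]; simp [hι.map_one]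
  have hL1C : ∀ g ∈ E, L g = 1 → g ∈ C := by
    intro g hg h1
    by_contra hgC
    obtain ⟨n, m, c, hn, hc, e⟩ := exists_commens hκ hg₀ hg hgC
    let K : Subgroup G :=
      { carrier := {x | x ∈ E ∧ L x = 1}
        mul_mem' := fun {a b} ha hb =>
          ⟨E.mul_mem ha.1 hb.1, by rw [hmul _ ha.1 _ hb.1, ha.2, hb.2, one_mul]⟩
        one_mem' := ⟨E.one_mem, hLC 1 C.one_mem⟩
        inv_mem' := fun {a} ha => ⟨E.inv_mem ha.1, by
          have := hmul a ha.1 a⁻¹ (E.inv_mem ha.1)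
          rw [mul_inv_cancel, hLC 1 C.one_mem, ha.2, one_mul] at this
          exact this.symm⟩ }
    have hgK : g ∈ K := ⟨hg, h1⟩
    have hcK : c ∈ K := ⟨hκ.le hc, hLC c hc⟩
    have h2 : g₀ ^ n ∈ K := by rw [e]; exact K.mul_mem hcK (K.zpow_mem hgK m)
    have h3 : L (g₀ ^ n) = 1 := h2.2
    rw [(hpow n).1] at h3
    exact absurd h3 (one_lt_pow₀ hgt hn).ne'
  -- the affine cones
  have hmulR : ∀ g ∈ E, ∀ h ∈ E, ∀ x : ℝ, (L (g * h) : ℝ) * x + T (g * h)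
      = L g * (L h * x + T h) + T g := by
    intro g hg h hh x
    rw [hmul g hg h hh, hTmul g hg h hh]; push_cast; ring
  have hDid : ∀ d ∈ D, ∀ x : ℝ, (L d : ℝ) * x + T d = x := by
    intro d hd x
    rw [hLC d (hι.le hd), hTC d (hι.le hd), (hι.ker d (hι.le hd)).2 hd]; simp
  have hposR : ∀ g ∈ E, (0 : ℝ) < L g := fun g hg => by exact_mod_cast hpos g hg
  refine not_countable_of_irrational (fun α : ℝ => {g : G | g ∈ E ∧ α < L g * α + T g}) ?_ ?_
  · intro α hα
    refine ⟨hι.le.trans hκ.le, fun x hx => hx.1, ?_, ?_, ?_, ?_, ?_⟩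
    · rintro a ⟨ha, ha'⟩ b ⟨hb, hb'⟩
      refine ⟨E.mul_mem ha hb, ?_⟩
      rw [hmulR a ha b hb]
      nlinarith [hposR a ha, mul_lt_mul_of_pos_left hb' (hposR a ha)]
    · intro x hx
      rcases lt_trichotomy α (L x * α + T x) with h1 | h1 | h1
      · exact Or.inl ⟨hx, h1⟩
      · right; right
        by_cases hLx : L x = 1
        · have hxC := hL1C x hx hLx
          rw [hLx, hTC x hxC] at h1
          have h2 : (ι x : ℝ) = 0 := by push_cast at h1; linarith
          exact (hι.ker x hxC).1 (by exact_mod_cast h2)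
        · exfalso
          apply hα
          have hne' : (1 - (L x : ℝ)) ≠ 0 := by
            intro h; apply hLx
            have : (L x : ℝ) = 1 := by linarith
            exact_mod_cast this
          refine ⟨T x / (1 - L x), ?_⟩
          push_cast
          field_simp
          linarith
      · right; left
        refine ⟨E.inv_mem hx, ?_⟩
        have h2 := hmulR x⁻¹ (E.inv_mem hx) x hx α
        rw [inv_mul_cancel, hDid 1 D.one_mem] at h2
        have h3 := mul_lt_mul_of_pos_left h1 (hposR _ (E.inv_mem hx))
        linarith
    · rintro x ⟨hx, hx'⟩ hxD
      rw [hDid x hxD] at hx'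
      exact lt_irrefl _ hx'
    · rintro d hd x ⟨hx, hx'⟩
      have hdE := hκ.le (hι.le hd)
      refine ⟨E.mul_mem hdE hx, ?_⟩
      rw [hmulR d hdE x hx, hDid d hd]; exact hx'
    · rintro d hd x ⟨hx, hx'⟩
      have hdE := hκ.le (hι.le hd)
      refine ⟨E.mul_mem hx hdE, ?_⟩
      rw [hmulR x hx d hdE, hDid d hd]; exact hx'
  · intro α γ hα hγ hlt heq
    have hβ : (0 : ℝ) < ι c₀ := by exact_mod_cast hc₀p
    have hgtR : (1 : ℝ) < L g₀ := by exact_mod_cast hgt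
    have hd : 0 < γ - α := by linarith
    obtain ⟨n, hn⟩ := pow_unbounded_of_one_lt ((ι c₀ : ℝ) / (γ - α) + 1) hgtR
    have hn' : (ι c₀ : ℝ) < ((L g₀ : ℝ) ^ n - 1) * (γ - α) := by
      rw [← div_lt_iff₀ hd]; linarith
    set k : ℤ := ⌊((L g₀ : ℝ) ^ n - 1) * α / ι c₀⌋ + 1 with hk
    have hk1 : ((L g₀ : ℝ) ^ n - 1) * α < k * ι c₀ := by
      rw [← div_lt_iff₀ hβ, hk]; push_cast; exact Int.lt_floor_add_one _
    have hk2 : (k : ℝ) * ι c₀ ≤ ((L g₀ : ℝ) ^ n - 1) * α + ι c₀ := by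
      have h1 := Int.floor_le (((L g₀ : ℝ) ^ n - 1) * α / ι c₀)
      rw [le_div_iff₀ hβ] at h1
      rw [hk]; push_cast; linarith
    have hcz := C.zpow_mem hc₀ (-k)
    have hgn := E.pow_mem hg₀ n
    have hval : ∀ x : ℝ, (L (c₀ ^ (-k) * g₀ ^ n) : ℝ) * x + T (c₀ ^ (-k) * g₀ ^ n)
        = (L g₀ : ℝ) ^ n * x - k * ι c₀ := by
      intro x
      rw [hmulR _ (hκ.le hcz) _ hgn, hLC _ hcz, hTC _ hcz, (hpow n).1, (hpow n).2,
        hι.map_zpow hc₀]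
      push_cast; ring
    have hmem : c₀ ^ (-k) * g₀ ^ n ∈ {g : G | g ∈ E ∧ γ < L g * γ + T g} := by
      refine ⟨E.mul_mem (hκ.le hcz) hgn, ?_⟩
      rw [hval]; nlinarith
    rw [← heq] at hmem
    have := hmem.2
    rw [hval] at this
    linarith

lemma not_countable_of_nonreversing (hι : IsRatHom D C ι) (hκ : IsRatHom C E κ)
    (hDn : ∀ g ∈ E, ∀ d ∈ D, g * d * g⁻¹ ∈ D)
    (hnr : ∀ g ∈ E, ∀ c ∈ C, ¬ ι (g * c * g⁻¹) * ι c < 0)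
    (hDC : D < C) (hCE : C < E) (hP : RelCone D E P) :
    ¬ {P : Set G | RelCone D E P}.Countable := by
  obtain ⟨c₀, hc₀, hc₀D⟩ := SetLike.exists_of_lt hDC
  obtain ⟨L, hpos, hL, hmul, hLC⟩ := exists_scale hι hκ hDn hnr hc₀ hc₀D
  by_cases hL1 : ∀ g ∈ E, L g = 1
  · exact not_countable_of_abelian hι hκ hL hL1 hDC hCE hP
  push Not at hL1
  obtain ⟨g, hg, hg1⟩ := hL1
  have h0 : ι c₀ ≠ 0 := fun h => hc₀D ((hι.ker _ hc₀).1 h)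
  obtain ⟨c, hc, hcp⟩ : ∃ c ∈ C, 0 < ι c := by
    rcases lt_or_gt_of_ne h0 with h | h
    · exact ⟨c₀⁻¹, C.inv_mem hc₀, by rw [hι.map_inv hc₀]; linarith⟩
    · exact ⟨c₀, hc₀, h⟩
  obtain ⟨g₀, hg₀, hgt⟩ : ∃ g₀ ∈ E, 1 < L g₀ := by
    rcases lt_or_gt_of_ne hg1 with h | h
    · refine ⟨g⁻¹, E.inv_mem hg, ?_⟩
      have h1 := hmul g hg _ (E.inv_mem hg)
      rw [mul_inv_cancel, hLC 1 C.one_mem] at h1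
      have h2 := hpos _ (E.inv_mem hg)
      nlinarith
    · exact ⟨g, hg, h⟩
  exact not_countable_of_affine hι hκ hDn hL hpos hmul hLC hg₀ hgt hc hcp

end partF

section partH
variable {G : Type*} [Group G] {C D E : Subgroup G} {P Q R : Set G} {ι κ : G → ℚ}

lemma convCone_bot (P : Set G) : ConvCone (⊥ : Subgroup G) P := by
  intro x hx _ c hc
  rw [Subgroup.mem_bot] at hc
  subst hc
  simpa using hx

lemma convCone_self (h : RelCone D E P) : ConvCone E P :=
  fun x hx hxE => absurd (h.sub x hx) hxE

lemma exists_pred (hfin : {C : Subgroup G | ConvCone C P}.Finite) (h : RelCone ⊥ ⊤ P)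
    (hbot : E ≠ ⊥) :
    ∃ C, ConvCone C P ∧ C < E ∧ ∀ F, ConvCone F P → F < E → F ≤ C := by
  have hf : {C : Subgroup G | ConvCone C P ∧ C < E}.Finite := hfin.subset (fun C hC => hC.1)
  obtain ⟨C, hC⟩ := hf.exists_maximal ⟨⊥, convCone_bot P, bot_lt_iff_ne_bot.2 hbot⟩
  refine ⟨C, hC.prop.1, hC.prop.2, fun F hF hFE => ?_⟩
  rcases hF.total h hC.prop.1 with h1 | h1
  · exact h1
  · exact hC.le_of_ge ⟨hF, hFE⟩ h1

/-- The inductive claim. -/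
def ConeClaim (P : Set G) (E : Subgroup G) : Prop :=
  (∀ Q, RelCone ⊥ E Q → ∀ F, ConvCone F P → F ≤ E → ConvCone F Q) ∧
    {Q : Set G | RelCone ⊥ E Q}.Finite

lemma normalizes (h : RelCone ⊥ ⊤ P) (hC : ConvCone C P) (hD : ConvCone D P) (hDC : D < C)
    (hpred : ∀ F, ConvCone F P → F < C → F ≤ D) (hT : ConeClaim P C)
    (hn : ∀ g ∈ E, ∀ c ∈ C, g * c * g⁻¹ ∈ C) : ∀ g ∈ E, ∀ d ∈ D, g * d * g⁻¹ ∈ D := by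
  intro g hg
  have hn' : ∀ c, g * c * g⁻¹ ∈ C → c ∈ C := by
    intro c hc
    have := hn _ (E.inv_mem hg) _ hc
    have e : g⁻¹ * (g * c * g⁻¹) * g⁻¹⁻¹ = c := by group
    rwa [e] at this
  have hPC := h.inter (C := C) bot_le le_top
  have hR : RelCone ⊥ C {x : G | g * x * g⁻¹ ∈ P ∩ C} := by
    refine ⟨bot_le, fun x hx => hn' x hx.2, ?_, ?_, ?_, ?_, ?_⟩
    · intro a ha b hb
      have := hPC.mul _ ha _ hb
      have e : g * a * g⁻¹ * (g * b * g⁻¹) = g * (a * b) * g⁻¹ := by group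
      rwa [e] at this
    · intro x hx
      rcases hPC.tot _ (hn g hg x hx) with h1 | h1 | h1
      · exact Or.inl h1
      · right; left
        have e : (g * x * g⁻¹)⁻¹ = g * x⁻¹ * g⁻¹ := by group
        rwa [e] at h1
      · right; right
        rw [Subgroup.mem_bot] at h1 ⊢
        exact conj_eq_one_iff.1 h1
    · intro x hx h1
      rw [Subgroup.mem_bot] at h1
      subst h1
      refine hPC.disj _ hx ?_
      rw [Subgroup.mem_bot]; group
    · intro d hd x hx
      rw [Subgroup.mem_bot] at hd
      subst hd; rwa [one_mul]
    · intro d hd x hx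
      rw [Subgroup.mem_bot] at hd
      subst hd; rwa [mul_one]
  have hDR := hT.1 _ hR D hD hDC.le
  let D' : Subgroup G := D.map (MulAut.conj g).toMonoidHom
  have hmem : ∀ d, d ∈ D' ↔ g⁻¹ * d * g ∈ D := by
    intro d
    constructor
    · rintro ⟨x, hx, rfl⟩
      have e : g⁻¹ * (g * x * g⁻¹) * g = x := by group
      show g⁻¹ * (g * x * g⁻¹) * g ∈ D
      rw [e]; exact hx
    · intro hd
      refine ⟨_, hd, ?_⟩
      show g * (g⁻¹ * d * g) * g⁻¹ = d
      group
  have hle : D' ≤ C := by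
    rintro _ ⟨x, hx, rfl⟩
    exact hn g hg x (hDC.le hx)
  have hD'C : ConvCone D' (P ∩ C) := by
    intro x hx hxD c hc
    rw [hmem] at hxD hc
    have hxR : g⁻¹ * x * g ∈ {x : G | g * x * g⁻¹ ∈ P ∩ C} := by
      have e : g * (g⁻¹ * x * g) * g⁻¹ = x := by group
      show g * (g⁻¹ * x * g) * g⁻¹ ∈ P ∩ C
      rwa [e]
    obtain ⟨h1, h2⟩ := hDR _ hxR hxD _ hc
    have h1' : g * (g⁻¹ * c * g * (g⁻¹ * x * g)) * g⁻¹ ∈ P ∩ C := h1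
    have h2' : g * (g⁻¹ * x * g * (g⁻¹ * c * g)) * g⁻¹ ∈ P ∩ C := h2
    have e1 : g * (g⁻¹ * c * g * (g⁻¹ * x * g)) * g⁻¹ = c * x := by group
    have e2 : g * (g⁻¹ * x * g * (g⁻¹ * c * g)) * g⁻¹ = x * c := by group
    rw [e1] at h1'
    rw [e2] at h2'
    exact ⟨h1', h2'⟩
  have hD' : ConvCone D' P := hC.trans hD'C hle
  have hlt : D' < C := by
    refine lt_of_le_of_ne hle fun heq => ?_
    obtain ⟨c, hc, hcD⟩ := SetLike.exists_of_lt hDC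
    have h1 : g * c * g⁻¹ ∈ D' := heq ▸ hn g hg c hc
    rw [hmem] at h1
    have e : g⁻¹ * (g * c * g⁻¹) * g = c := by group
    rw [e] at h1
    exact hcD h1
  intro d hd
  exact hpred D' hD' hlt ⟨d, hd, rfl⟩

lemma coneClaim_step (hcount : {P : Set G | RelCone ⊥ ⊤ P}.Countable)
    (h : RelCone ⊥ ⊤ P) {H : Subgroup G} (hH : ∀ g, ∃ n : ℕ, n ≠ 0 ∧ g ^ n ∈ H)
    (hHP : ∀ h ∈ H, ∀ x ∈ P, h * x * h⁻¹ ∈ P)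
    (hE : ConvCone E P) (ih : ∀ F, ConvCone F P → F < E → ConeClaim P F) : ConeClaim P E := by
  have hfin := conv_finite hcount h
  have hrat : ∀ C E : Subgroup G, ConvCone C P → ConvCone E P → C < E →
      (∀ F, ConvCone F P → F < E → F ≤ C) → ∃ ι, IsRatHom C E ι := by
    intro C E hC hE hlt hpred
    refine exists_ratHom_of_jump hcount h hH hHP hC hE hlt ?_
    intro F hF hCF hFE
    rcases hFE.lt_or_eq with h1 | h1
    · exact Or.inl (le_antisymm (hpred F hF h1) hCF)
    · exact Or.inr h1
  by_cases hbot : E = ⊥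
  · subst hbot
    have hQ0 : ∀ Q : Set G, RelCone ⊥ ⊥ Q → Q = ∅ := by
      intro Q hQ
      rw [Set.eq_empty_iff_forall_notMem]
      exact fun x hx => hQ.disj x hx (hQ.sub x hx)
    refine ⟨?_, (Set.finite_singleton ∅).subset fun Q hQ => hQ0 Q hQ⟩
    intro Q hQ F _ _
    rw [hQ0 Q hQ]
    intro x hx
    exact absurd hx (Set.notMem_empty x)
  obtain ⟨C, hC, hCE, hpred⟩ := exists_pred hfin h hbot
  obtain ⟨κ, hκ⟩ := hrat C E hC hE hCE hpred
  have hT := ih C hC hCE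
  have hconv : ∀ Q, RelCone ⊥ E Q → ConvCone C Q := by
    intro Q hQ
    by_cases hCb : C = ⊥
    · rw [hCb]; exact convCone_bot Q
    obtain ⟨D, hD, hDC, hpredD⟩ := exists_pred hfin h hCb
    obtain ⟨ι, hι⟩ := hrat D C hD hC hDC hpredD
    have hDn := normalizes (E := E) h hC hD hDC hpredD hT (fun g hg c hc => hκ.normal hg hc)
    by_cases hrev : ∃ g ∈ E, ∃ c ∈ C, ι (g * c * g⁻¹) * ι c < 0
    · obtain ⟨g, hg, c, hc, hneg⟩ := hrev
      exact conv_of_reversing hι hκ hDn hQ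
        (hT.1 _ (hQ.inter bot_le hCE.le) D hD hDC.le) hg hc hneg
    · push Not at hrev
      exfalso
      have hDT : RelCone D ⊤ (P \ D) := h.diff le_top hD
      have hDE : RelCone D E ((P \ D) ∩ E) := hDT.inter (hDC.le.trans hCE.le) le_top
      have hET : RelCone E ⊤ (P \ E) := h.diff le_top hE
      have hbD : RelCone ⊥ D (P ∩ D) := h.inter bot_le le_top
      refine not_countable_of_nonreversing hι hκ hDn
        (fun g hg c hc => not_lt.2 (hrev g hg c hc)) hDC hCE hDE ?_
      exact countable_lower (countable_upper hcount hbD) hET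
  refine ⟨?_, ?_⟩
  · intro Q hQ F hF hFE
    rcases hFE.lt_or_eq with h1 | h1
    · have hFC := hpred F hF h1
      exact (hconv Q hQ).trans (hT.1 _ (hQ.inter bot_le hCE.le) F hF hFC) hFC
    · rw [h1]; exact convCone_self hQ
  · refine (Set.Finite.image2 (fun A B => A ∪ B) hκ.finite_cones hT.2).subset ?_
    intro Q hQ
    have hQ : RelCone ⊥ E Q := hQ
    refine ⟨Q \ C, hQ.diff hCE.le (hconv Q hQ), Q ∩ C, hQ.inter bot_le hCE.le, ?_⟩
    exact Set.sdiff_union_inter Q C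

lemma finite_of_countable (hc : {P : Set G | IsPosCone P}.Countable) :
    {P : Set G | IsPosCone P}.Finite := by
  rcases Set.eq_empty_or_nonempty {P : Set G | IsPosCone P} with h0 | h0
  · rw [h0]; exact Set.finite_empty
  obtain ⟨P, hP, H, hH, hHP⟩ := exists_good_cone hc h0
  have heq : {P : Set G | IsPosCone P} = {P : Set G | RelCone ⊥ ⊤ P} := by
    ext P; exact isPosCone_iff
  rw [heq] at hc ⊢
  have h := isPosCone_iff.1 hP
  have hfin := conv_finite hc h
  have key : ∀ E : Subgroup G, ConvCone E P → ConeClaim P E := by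
    by_contra hcon
    push Not at hcon
    obtain ⟨E₀, hE₀, hE₀'⟩ := hcon
    have hf : {C : Subgroup G | ConvCone C P ∧ ¬ ConeClaim P C}.Finite :=
      hfin.subset (fun C hC => hC.1)
    obtain ⟨E, hE⟩ := hf.exists_minimal ⟨E₀, hE₀, hE₀'⟩
    refine hE.prop.2 (coneClaim_step hc h hH hHP hE.prop.1 fun F hF hFE => ?_)
    by_contra hn
    exact hE.not_lt ⟨hF, hn⟩ hFE
  exact (key ⊤ (convCone_self h)).2

end partH

/-- If the set of left-order positive cones on a group is infinite, then it is
uncountable. -/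
theorem uncountably_many_orderings (Γ : Type*) [Group Γ]
    (h : {P : Set Γ | IsPosCone P}.Infinite) :
    ¬ {P : Set Γ | IsPosCone P}.Countable := by
  
  intro hc
  exact h (finite_of_countable hc)
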